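/- arXiv:1504.03100 — 5 statements merged into one kernel-verified Lean document; each statement's English description precedes it below -/
import Mathlib

section
/- Let α ∈ (0,1) and v > 0. For every z ≥ 0, the Laplace transform of the function x ↦ v x^{α−1} E_{α,α}(−v x^α) on (0,∞) equals v/(v + z^α), i.e. ∫_0^∞ e^{−zx} v x^{α−1} E_{α,α}(−v x^α) dx = v/(v + z^α). In particular (taking z = 0) this function is a probability density on (0,∞). -/
/-!
Write `f x = v x^(α-1) E_{α,α}(-v x^α)`, which is `falpha α v x`. The series for `f` can be integrated
term by term against the kernel `(t - s)^(α-1)`, and the beta integral shows that `f` solves the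
Volterra equation `f(t) = c t^(α-1) - c ∫₀ᵗ (t-s)^(α-1) f(s) ds` with `c = v / Γ(α)`
(`falpha_volterra`).

Positivity (`falpha_pos`) uses only this equation and the log-convexity of the kernel. The function
is positive near `0`. At a first point `t₀` with `f t₀ ≤ 0`, compare the equation at `t₀` with the
equation at a point `t₁ < t₀` where `f` attains its maximum over a short interval `[τ, t₀]`: the
memory up to `t₁` has decayed by at least the factor by which the forcing term has decayed, and the
memory from `[t₁, t₀]` is at most `f t₁` times a small constant, so `f t₀ > 0`.

Positivity makes the memory term nonnegative, hence `f t ≤ c t^(α-1)`, and the Laplace integral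
converges absolutely for every `z > 0`. The Laplace transform of the Volterra equation is then a
linear equation for the transform of `f`, with solution `v / (v + z^α)` (`integral_exp_mul_falpha`);
no analytic continuation from large `z` is needed. The case `z = 0` is the limit `z → 0`: Fatou's
lemma gives integrability of `f` and dominated convergence gives its integral (`integral_falpha`).
-/

open MeasureTheory Filter Set

/-- Mittag-Leffler function `E_{a,b}(z) = ∑ z^n / Γ(a n + b)`. -/
noncomputable def mlf (a b z : ℝ) : ℝ := ∑' n : ℕ, z ^ n / Real.Gamma (a * n + b)

/-- `f^{α,λ}(x) = λ x^{α-1} E_{α,α}(-λ x^α)`. -/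
noncomputable def falpha (a lam x : ℝ) : ℝ := lam * x ^ (a - 1) * mlf a a (-lam * x ^ a)

/-- Hölder regularity `γ` on a set `S`. -/
def HolderOn (f : ℝ → ℝ) (γ : ℝ) (S : Set ℝ) : Prop :=
  ∃ C > 0, ∀ x ∈ S, ∀ y ∈ S, |f x - f y| ≤ C * |x - y| ^ γ

/-- Riemann–Liouville fractional integral of order `v` on `[0,1]`. -/
noncomputable def fracInt (v : ℝ) (f : ℝ → ℝ) (x : ℝ) : ℝ :=
  (1 / Real.Gamma v) * ∫ t in (0:ℝ)..x, f t * (x - t) ^ (v - 1)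

/-- The kernel integral `x ↦ ∫_0^x f(t) (x-t)^{-v} dt` appearing in the
Riemann–Liouville fractional derivative. -/
noncomputable def rlKer (v : ℝ) (f : ℝ → ℝ) (y : ℝ) : ℝ :=
  ∫ t in (0:ℝ)..y, f t * (y - t) ^ (-v)

/-- Riemann–Liouville fractional derivative of order `v` on `[0,1]`
(defined when `rlKer v f` is differentiable). -/
noncomputable def fracDeriv (v : ℝ) (f : ℝ → ℝ) (x : ℝ) : ℝ :=
  (1 / Real.Gamma (1 - v)) * derivWithin (rlKer v f) (Set.Icc 0 1) x
/-- Causal convolution on `[0,∞)`: `(f ∗ g)(t) = ∫_0^t f(t-s) g(s) ds`. -/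
noncomputable def conv (f g : ℝ → ℝ) (t : ℝ) : ℝ := ∫ s in (0:ℝ)..t, f (t - s) * g s

/-- Iterated convolution: `convPow φ k = φ^{*(k+1)}`, so `convPow φ 0 = φ`. -/
noncomputable def convPow (φ : ℝ → ℝ) : ℕ → ℝ → ℝ
  | 0 => φ
  | (k + 1) => conv (convPow φ k) φ

/-- Laplace transform `f̂(z) = ∫_0^∞ e^{-z t} f(t) dt`. -/
noncomputable def laplace (f : ℝ → ℝ) (z : ℝ) : ℝ :=
  ∫ t in Set.Ioi (0:ℝ), Real.exp (-z * t) * f t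

/-! ### The Mittag-Leffler series -/

/-- Comparison of the Euler integral with its tail beyond `M`: `Γ` grows faster than every
exponential. -/
lemma exp_neg_mul_rpow_le_Gamma {M s : ℝ} (hM : 0 < M) (hs : 1 ≤ s) :
    Real.exp (-M) * M ^ (s - 1) ≤ Real.Gamma s := by
  have hs0 : 0 < s := by linarith
  rw [Real.Gamma_eq_integral hs0, ← integral_exp_neg_Ioi M, ← integral_mul_const]
  have hint := Real.GammaIntegral_convergent hs0
  have hsub : Ioi M ⊆ Ioi (0 : ℝ) := Ioi_subset_Ioi hM.le
  calc ∫ x in Ioi M, Real.exp (-x) * M ^ (s - 1)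
      ≤ ∫ x in Ioi M, Real.exp (-x) * x ^ (s - 1) := by
        refine setIntegral_mono_on ?_ (hint.mono_set hsub) measurableSet_Ioi ?_
        · exact (integrableOn_exp_neg_Ioi M).mul_const _
        · intro x hx
          have : M < x := hx
          gcongr
    _ ≤ _ := by
        refine setIntegral_mono_set hint ?_ hsub.eventuallyLE
        filter_upwards [ae_restrict_mem measurableSet_Ioi] with x hx
        have : (0 : ℝ) < x := hx
        simp only [Pi.zero_apply]
        positivity

lemma summable_mlf_abs {a b : ℝ} (ha : 0 < a) (hb : 0 < b) (R : ℝ) :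
    Summable fun n : ℕ => |R| ^ n / Real.Gamma (a * n + b) := by
  -- `M ^ a = 2 (|R| + 1)` makes the terms geometrically small
  set M : ℝ := (2 * (|R| + 1)) ^ a⁻¹ with hM
  have hR := abs_nonneg R
  have hM0 : 0 < M := by positivity
  have hMa : M ^ a = 2 * (|R| + 1) := by
    rw [hM, ← Real.rpow_mul (by positivity), inv_mul_cancel₀ ha.ne', Real.rpow_one]
  have hgeo : Summable fun n : ℕ => (Real.exp M * M ^ (1 - b)) * (1 / 2 : ℝ) ^ n :=
    summable_geometric_two.mul_left _
  refine hgeo.of_norm_bounded_eventually_nat ?_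
  filter_upwards [eventually_ge_atTop ⌈1 / a⌉₊] with n hn
  have hn' : 1 ≤ a * n := by
    have := Nat.ceil_le.1 hn
    rw [div_le_iff₀ ha] at this
    linarith
  have hG := exp_neg_mul_rpow_le_Gamma hM0 (s := a * n + b) (by linarith)
  have hpow : M ^ (a * n + b - 1) = (2 * (|R| + 1)) ^ n * M ^ (b - 1) := by
    rw [add_sub_assoc, Real.rpow_add hM0, Real.rpow_mul hM0.le, hMa, Real.rpow_natCast]
  have hlow : 0 < Real.exp (-M) * M ^ (a * n + b - 1) := by positivity
  rw [Real.norm_of_nonneg (by have := hlow.trans_le hG; positivity)]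
  calc |R| ^ n / Real.Gamma (a * n + b)
      ≤ (|R| + 1) ^ n / (Real.exp (-M) * M ^ (a * n + b - 1)) := by
        gcongr
        linarith
    _ = (Real.exp M * M ^ (1 - b)) * (1 / 2 : ℝ) ^ n := by
        rw [hpow, Real.exp_neg, mul_pow, show 1 - b = -(b - 1) by ring, Real.rpow_neg hM0.le]
        field_simp
        rw [← mul_pow]; norm_num

lemma continuous_mlf {a b : ℝ} (ha : 0 < a) (hb : 0 < b) : Continuous (mlf a b) := by
  rw [continuous_iff_continuousAt]
  intro z
  have h : ContinuousOn (mlf a b) (Metric.ball 0 (|z| + 1)) := by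
    refine continuousOn_tsum (fun n => by fun_prop) (summable_mlf_abs ha hb (|z| + 1)) ?_
    intro n x hx
    have hx' : |x| ≤ |(|z| + 1)| := by
      rw [abs_of_nonneg (by positivity : 0 ≤ |z| + 1)]
      simpa using (mem_ball_zero_iff.1 hx).le
    have hG : 0 < Real.Gamma (a * n + b) := Real.Gamma_pos_of_pos (by positivity)
    rw [norm_div, norm_pow, Real.norm_eq_abs, Real.norm_of_nonneg hG.le]
    gcongr
  exact h.continuousAt (Metric.isOpen_ball.mem_nhds (by simp))

/-! ### The beta integral -/

/-- The Euler beta integral on `[0, t]` for real exponents. -/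
lemma integral_rpow_mul_sub_rpow {p q t : ℝ} (hp : 0 < p) (hq : 0 < q) (ht : 0 < t) :
    ∫ s in (0:ℝ)..t, (t - s) ^ (q - 1) * s ^ (p - 1) =
      Real.Gamma p * Real.Gamma q / Real.Gamma (p + q) * t ^ (p + q - 1) := by
  have h := Complex.betaIntegral_scaled p q ht
  have hb := Complex.Gamma_mul_Gamma_eq_betaIntegral (s := p) (t := q) (by simpa) (by simpa)
  have hG : Real.Gamma (p + q) ≠ 0 := (Real.Gamma_pos_of_pos (by positivity)).ne'
  have hb' : Complex.betaIntegral p q =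
      ((Real.Gamma p * Real.Gamma q / Real.Gamma (p + q) : ℝ) : ℂ) := by
    rw [← Complex.ofReal_add, Complex.Gamma_ofReal, Complex.Gamma_ofReal, Complex.Gamma_ofReal] at hb
    have : (Real.Gamma (p + q) : ℂ) ≠ 0 := by exact_mod_cast hG
    push_cast
    field_simp
    linear_combination -hb
  have hL : ∫ x in (0:ℝ)..t, (x : ℂ) ^ ((p : ℂ) - 1) * ((t : ℂ) - x) ^ ((q : ℂ) - 1) =
      ((∫ s in (0:ℝ)..t, (t - s) ^ (q - 1) * s ^ (p - 1) : ℝ) : ℂ) := by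
    rw [← intervalIntegral.integral_ofReal]
    refine intervalIntegral.integral_congr fun x hx => ?_
    rw [uIcc_of_le ht.le] at hx
    push_cast
    rw [Complex.ofReal_cpow (sub_nonneg.2 hx.2), Complex.ofReal_cpow hx.1]
    push_cast
    ring
  rw [hL, hb'] at h
  have ht' : (t : ℂ) ^ ((p : ℂ) + q - 1) = ((t ^ (p + q - 1) : ℝ) : ℂ) := by
    rw [Complex.ofReal_cpow ht.le]; push_cast; rfl
  rw [ht'] at h
  rw [mul_comm (_ / _)]
  exact_mod_cast h

lemma intervalIntegrable_rpow_mul_sub_rpow {p q t : ℝ} (hp : 0 < p) (hq : 0 < q) (ht : 0 < t) :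
    IntervalIntegrable (fun s => (t - s) ^ (q - 1) * s ^ (p - 1)) volume 0 t := by
  -- a non-integrable function would have integral `0`
  by_contra h
  have h0 := intervalIntegral.integral_undef h
  rw [integral_rpow_mul_sub_rpow hp hq ht] at h0
  have h1 := Real.Gamma_pos_of_pos hp
  have h2 := Real.Gamma_pos_of_pos hq
  have h3 := Real.Gamma_pos_of_pos (add_pos hp hq)
  have h4 : 0 < t ^ (p + q - 1) := by positivity
  exact absurd h0 (by positivity)

/-! ### The Volterra equation -/

lemma continuousOn_falpha {a v : ℝ} (ha : 0 < a) : ContinuousOn (falpha a v) (Ioi 0) := by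
  unfold falpha
  refine ContinuousOn.mul (continuousOn_const.mul ?_) ?_
  · exact fun x hx => (Real.continuousAt_rpow_const _ _ (Or.inl (ne_of_gt hx))).continuousWithinAt
  · refine (continuous_mlf ha ha).comp_continuousOn (continuousOn_const.mul ?_)
    exact (Real.continuous_rpow_const ha.le).continuousOn

lemma exists_abs_falpha_le {a v : ℝ} (ha : 0 < a) (t : ℝ) :
    ∃ C, ∀ s ∈ Ioc 0 t, |falpha a v s| ≤ C * s ^ (a - 1) := by
  have hc : Continuous fun s : ℝ => v * mlf a a (-v * s ^ a) :=
    continuous_const.mul ((continuous_mlf ha ha).comp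
      (continuous_const.mul (Real.continuous_rpow_const ha.le)))
  obtain ⟨C, hC⟩ := (isCompact_Icc (a := (0:ℝ)) (b := t)).exists_bound_of_continuousOn hc.continuousOn
  refine ⟨C, fun s hs => ?_⟩
  have h1 := hC s ⟨hs.1.le, hs.2⟩
  have h2 : 0 ≤ s ^ (a - 1) := Real.rpow_nonneg hs.1.le _
  rw [falpha, show v * s ^ (a - 1) * mlf a a (-v * s ^ a)
    = (v * mlf a a (-v * s ^ a)) * s ^ (a - 1) by ring, abs_mul, abs_of_nonneg h2]
  exact mul_le_mul_of_nonneg_right h1 h2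

lemma aestronglyMeasurable_falpha {a v : ℝ} (ha : 0 < a) :
    AEStronglyMeasurable (falpha a v) (volume.restrict (Ioi 0)) :=
  (continuousOn_falpha ha).aestronglyMeasurable measurableSet_Ioi

lemma intervalIntegrable_sub_rpow_mul_falpha {a v t : ℝ} (ha : 0 < a) (ht : 0 < t) :
    IntervalIntegrable (fun s => (t - s) ^ (a - 1) * falpha a v s) volume 0 t := by
  obtain ⟨C, hC⟩ := exists_abs_falpha_le (v := v) ha t
  have hb := (intervalIntegrable_rpow_mul_sub_rpow ha ha ht).const_mul C
  refine hb.mono_fun ?_ ?_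
  · rw [uIoc_of_le ht.le]
    refine AEStronglyMeasurable.mul ?_
      ((aestronglyMeasurable_falpha ha).mono_measure (Measure.restrict_mono Ioc_subset_Ioi_self le_rfl))
    exact ((measurable_const.sub measurable_id).pow_const _).aestronglyMeasurable
  · rw [uIoc_of_le ht.le]
    filter_upwards [ae_restrict_mem measurableSet_Ioc] with s hs
    have h1 : 0 ≤ (t - s) ^ (a - 1) := Real.rpow_nonneg (sub_nonneg.2 hs.2) _
    rw [norm_mul, Real.norm_of_nonneg h1, Real.norm_eq_abs]
    calc (t - s) ^ (a - 1) * |falpha a v s|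
        ≤ (t - s) ^ (a - 1) * (C * s ^ (a - 1)) := mul_le_mul_of_nonneg_left (hC s hs) h1
      _ = C * ((t - s) ^ (a - 1) * s ^ (a - 1)) := by ring
      _ ≤ _ := le_abs_self _

/-- The Volterra equation `f = c k - c (k ∗ f)` with `k s = s ^ (a - 1)` and `c = v / Γ(a)`. Integrating
the series against the kernel term by term, the beta integral turns the `n`-th term into a multiple
of the `n + 1`-st, so the memory term is the series without its first term. -/
lemma falpha_volterra {a v t : ℝ} (ha : 0 < a) (ht : 0 < t) :
    falpha a v t = v / Real.Gamma a * t ^ (a - 1) -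
      v / Real.Gamma a * ∫ s in (0:ℝ)..t, (t - s) ^ (a - 1) * falpha a v s := by
  have hGa := Real.Gamma_pos_of_pos ha
  have hG : ∀ n : ℕ, 0 < Real.Gamma (a * n + a) := fun n => Real.Gamma_pos_of_pos (by positivity)
  -- `v * T n` is the `n`-th term of the series for `falpha a v`; `K n` is its beta integrand
  obtain ⟨T, hT⟩ : ∃ T : ℕ → ℝ → ℝ,
      T = fun (n : ℕ) s => s ^ (a - 1) * ((-v * s ^ a) ^ n / Real.Gamma (a * n + a)) := ⟨_, rfl⟩
  have hfT : ∀ s, falpha a v s = v * ∑' n, T n s := fun s => by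
    simp only [hT]
    rw [falpha, mlf, mul_assoc, ← tsum_mul_left]
  have hTsum : Summable fun n => |T n t| := by
    refine ((summable_mlf_abs ha ha (-v * t ^ a)).mul_left (t ^ (a - 1))).congr fun n => ?_
    simp only [hT, abs_mul, abs_div, abs_pow, abs_of_pos (hG n),
      abs_of_nonneg (Real.rpow_nonneg ht.le (a - 1))]
  obtain ⟨K, hK⟩ : ∃ K : ℕ → ℝ → ℝ,
      K = fun (n : ℕ) s => (t - s) ^ (a - 1) * s ^ (a * n + a - 1) := ⟨_, rfl⟩
  have hTK : ∀ n, EqOn (fun s => (t - s) ^ (a - 1) * T n s)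
      (fun s => (-v) ^ n / Real.Gamma (a * n + a) * K n s) (Ioc 0 t) := by
    intro n s hs
    have : s ^ (a * n + a - 1) = s ^ (a - 1) * (s ^ a) ^ n := by
      rw [add_sub_assoc, Real.rpow_add hs.1, Real.rpow_mul hs.1.le, Real.rpow_natCast, mul_comm]
    simp only [hT, hK, this, mul_pow]
    ring
  have hKint : ∀ n, IntegrableOn (K n) (Ioc 0 t) := fun n => by
    rw [hK]
    exact (intervalIntegrable_iff_integrableOn_Ioc_of_le ht.le).1
      (intervalIntegrable_rpow_mul_sub_rpow (by positivity) ha ht)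
  have hKval : ∀ n : ℕ, (-v) ^ n / Real.Gamma (a * n + a) * (∫ s in Ioc 0 t, K n s) * v =
      - (Real.Gamma a * T (n + 1) t) := by
    intro n
    have hG' := hG (n + 1)
    have hG0 := hG n
    rw [← intervalIntegral.integral_of_le ht.le, hK,
      integral_rpow_mul_sub_rpow (by positivity) ha ht]
    have e1 : a * (n : ℝ) + a + a = a * ((n + 1 : ℕ) : ℝ) + a := by push_cast; ring
    have e2 : t ^ (a * ((n + 1 : ℕ) : ℝ) + a - 1) = t ^ (a - 1) * (t ^ a) ^ (n + 1) := by
      rw [add_sub_assoc, Real.rpow_add ht, Real.rpow_mul ht.le, Real.rpow_natCast, mul_comm]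
    rw [e1, e2]
    simp only [hT, mul_pow]
    field_simp
    ring
  have hint : ∀ n, Integrable (fun s => (t - s) ^ (a - 1) * T n s) (volume.restrict (Ioc 0 t)) :=
    fun n => IntegrableOn.congr_fun ((hKint n).const_mul _) (hTK n).symm measurableSet_Ioc
  have hval : ∀ n, v * ∫ s in Ioc 0 t, (t - s) ^ (a - 1) * T n s
      = - (Real.Gamma a * T (n + 1) t) := by
    intro n
    rw [setIntegral_congr_fun measurableSet_Ioc (hTK n), integral_const_mul, ← hKval n]
    ring
  have hnorm : ∀ n, |v| * ∫ s in Ioc 0 t, ‖(t - s) ^ (a - 1) * T n s‖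
      = Real.Gamma a * |T (n + 1) t| := by
    intro n
    have : EqOn (fun s => ‖(t - s) ^ (a - 1) * T n s‖)
        (fun s => |(-v) ^ n / Real.Gamma (a * n + a)| * K n s) (Ioc 0 t) := by
      intro s hs
      have h1 := hTK n hs
      have hK0 : 0 ≤ K n s := by
        rw [hK]
        exact mul_nonneg (Real.rpow_nonneg (sub_nonneg.2 hs.2) _) (Real.rpow_nonneg hs.1.le _)
      simp only at h1 ⊢
      rw [h1, norm_mul, Real.norm_of_nonneg hK0, Real.norm_eq_abs]
    have hI0 : 0 ≤ ∫ s in Ioc 0 t, K n s := setIntegral_nonneg measurableSet_Ioc fun s hs => by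
      rw [hK]
      exact mul_nonneg (Real.rpow_nonneg (sub_nonneg.2 hs.2) _) (Real.rpow_nonneg hs.1.le _)
    rw [setIntegral_congr_fun measurableSet_Ioc this, integral_const_mul]
    have h2 := congrArg abs (hKval n)
    rw [abs_neg, abs_mul, abs_mul, abs_mul, abs_of_nonneg hI0, abs_of_pos hGa] at h2
    rw [← h2]; ring
  rcases eq_or_ne v 0 with rfl | hv
  · simp [falpha]
  have hsum : Summable fun n => ∫ s in Ioc 0 t, ‖(t - s) ^ (a - 1) * T n s‖ := by
    refine (((summable_nat_add_iff 1).2 hTsum).mul_left (Real.Gamma a / |v|)).congr fun n => ?_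
    have := hnorm n
    have hv' : |v| ≠ 0 := abs_ne_zero.2 hv
    field_simp
    linarith
  have hmain := (hasSum_integral_of_summable_integral_norm hint hsum).mul_left v
  simp_rw [hval] at hmain
  have hshift : HasSum (fun n => -(Real.Gamma a * T (n + 1) t))
      (-(Real.Gamma a * (∑' n, T n t - T 0 t))) := by
    have h1 : HasSum (fun n => T (n + 1) t) (∑' n, T n t - T 0 t) := by
      have h2 : HasSum (fun n => T n t) (∑' n, T n t) := hTsum.of_abs.hasSum
      simpa using (hasSum_nat_add_iff' 1).2 h2
    exact (h1.mul_left (Real.Gamma a)).neg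
  have heq := HasSum.unique hmain hshift
  have hI : ∫ s in (0:ℝ)..t, (t - s) ^ (a - 1) * falpha a v s =
      v * ∫ s in Ioc 0 t, ∑' n, (t - s) ^ (a - 1) * T n s := by
    rw [intervalIntegral.integral_of_le ht.le, ← integral_const_mul]
    refine integral_congr_ae (Eventually.of_forall fun s => ?_)
    simp only [hfT, tsum_mul_left]
    ring
  rw [hI, heq, hfT]
  have hT0 : T 0 t = t ^ (a - 1) / Real.Gamma a := by simp [hT, div_eq_mul_inv]
  rw [hT0]
  field_simp
  ring

/-! ### Positivity -/

lemma falpha_pos_near_zero {a v : ℝ} (ha : 0 < a) (hv : 0 < v) :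
    ∃ δ > 0, ∀ x, 0 < x → x < δ → 0 < falpha a v x := by
  have hc : Continuous fun s : ℝ => mlf a a (-v * s ^ a) :=
    (continuous_mlf ha ha).comp (continuous_const.mul (Real.continuous_rpow_const ha.le))
  have h0 : 0 < mlf a a (-v * (0:ℝ) ^ a) := by
    have : mlf a a 0 = 1 / Real.Gamma a := by
      rw [mlf, tsum_eq_single 0 fun n hn => by simp [hn]]
      simp
    rw [Real.zero_rpow ha.ne', mul_zero, this]
    have := Real.Gamma_pos_of_pos ha
    positivity
  obtain ⟨δ, hδ, h⟩ := Metric.eventually_nhds_iff.1 (hc.continuousAt.eventually_const_lt h0)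
  refine ⟨δ, hδ, fun x hx hxδ => ?_⟩
  have := h (y := x) (by rwa [Real.dist_eq, sub_zero, abs_of_pos hx])
  rw [falpha]
  positivity

/-- The quotient `u ↦ (u + h) ^ (a - 1) / u ^ (a - 1)` is nondecreasing (log-convexity of the
kernel), so the memory term at a later time `t₀` is controlled by the one at `t₁`. -/
lemma integral_kernel_compare {a v t₁ t₀ : ℝ} (ha : 0 < a) (ha1 : a < 1) (ht₁ : 0 < t₁)
    (ht : t₁ < t₀) (hf : ∀ s ∈ Ioo 0 t₁, 0 ≤ falpha a v s) :
    ∫ s in (0:ℝ)..t₁, (t₀ - s) ^ (a - 1) * falpha a v s ≤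
      (t₀ / t₁) ^ (a - 1) * ∫ s in (0:ℝ)..t₁, (t₁ - s) ^ (a - 1) * falpha a v s := by
  rw [← intervalIntegral.integral_const_mul]
  have ht₀ : 0 < t₀ := ht₁.trans ht
  refine intervalIntegral.integral_mono_on_of_le_Ioo ht₁.le ?_ ?_ ?_
  · exact (intervalIntegrable_sub_rpow_mul_falpha ha ht₀).mono_set
      (by rw [uIcc_of_le ht₁.le, uIcc_of_le ht₀.le]; exact Icc_subset_Icc_right ht.le)
  · exact (intervalIntegrable_sub_rpow_mul_falpha ha ht₁).const_mul _
  · intro s hs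
    rw [← mul_assoc]
    refine mul_le_mul_of_nonneg_right ?_ (hf s hs)
    have h1 : 0 < t₁ - s := sub_pos.2 hs.2
    rw [← Real.mul_rpow (by positivity) h1.le]
    refine Real.rpow_le_rpow_of_nonpos (by positivity) ?_ (by linarith)
    rw [div_mul_eq_mul_div, div_le_iff₀ ht₁]
    nlinarith [hs.1]

/-- At a first time `t₀` where positivity fails, comparison with a maximum point `t₁` of the
function just before `t₀` shows that the value at `t₀` is nevertheless positive. -/
lemma falpha_pos {a v t : ℝ} (ha : 0 < a) (ha1 : a < 1) (hv : 0 < v) (ht : 0 < t) :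
    0 < falpha a v t := by
  by_contra! hneg
  obtain ⟨δ, hδ, hnear⟩ := falpha_pos_near_zero ha hv
  have hcont := continuousOn_falpha (v := v) ha
  set S : Set ℝ := Ici δ ∩ falpha a v ⁻¹' Iic 0 with hS
  have hSc : IsClosed S := (hcont.mono fun x hx => hδ.trans_le hx).preimage_isClosed_of_isClosed
    isClosed_Ici isClosed_Iic
  have hSn : S.Nonempty := ⟨t, by
    refine ⟨?_, hneg⟩
    by_contra h
    exact absurd (hnear t ht (not_le.1 h)) (not_lt.2 hneg)⟩
  have hSb : BddBelow S := ⟨δ, fun x hx => hx.1⟩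
  obtain ⟨t₀, ht₀⟩ : ∃ x, x = sInf S := ⟨_, rfl⟩
  have hmem : t₀ ∈ S := ht₀ ▸ hSc.csInf_mem hSn hSb
  have hft₀ : falpha a v t₀ ≤ 0 := hmem.2
  have ht₀pos : 0 < t₀ := hδ.trans_le hmem.1
  have hbefore : ∀ s, 0 < s → s < t₀ → 0 < falpha a v s := by
    intro s hs hst
    by_contra! h
    rcases lt_or_ge s δ with h1 | h1
    · exact absurd (hnear s hs h1) (not_lt.2 h)
    · exact absurd (csInf_le hSb (show s ∈ S from ⟨h1, h⟩)) (not_le.2 (ht₀ ▸ hst))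
  have hG := Real.Gamma_pos_of_pos ha
  obtain ⟨c, hc⟩ : ∃ c, c = v / Real.Gamma a := ⟨_, rfl⟩
  have hc0 : 0 < c := by rw [hc]; positivity
  -- both sides are continuous in `r` at `t₀`, where the inequality reads `0 < 1`
  have hev : ∀ᶠ r in nhds t₀, c * ((t₀ - r) ^ a / a) < (t₀ / r) ^ (a - 1) := by
    refine ContinuousAt.eventually_lt ?_ ?_ ?_
    · exact (continuous_const.mul (((Real.continuous_rpow_const ha.le).comp
        (continuous_const.sub continuous_id)).div_const a)).continuousAt
    · refine ContinuousAt.rpow_const (continuousAt_const.div continuousAt_id ht₀pos.ne') (Or.inl ?_)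
      simp [ht₀pos.ne']
    · simp [ht₀pos.ne', Real.zero_rpow ha.ne']
  obtain ⟨ε, hε, hball⟩ := Metric.eventually_nhds_iff.1 hev
  obtain ⟨τ, hτ1, hτ2⟩ := exists_between (max_lt (sub_lt_self t₀ hε) ht₀pos)
  have hτpos : 0 < τ := (le_max_right _ _).trans_lt hτ1
  have hτε : t₀ - ε < τ := (le_max_left _ _).trans_lt hτ1
  obtain ⟨t₁, ht₁, hmax⟩ := isCompact_Icc.exists_isMaxOn (nonempty_Icc.2 hτ2.le)
    (hcont.mono fun x (hx : x ∈ Icc τ t₀) => hτpos.trans_le hx.1)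
  have hft₁ : 0 < falpha a v t₁ :=
    (hbefore τ hτpos hτ2).trans_le (hmax (left_mem_Icc.2 hτ2.le))
  have ht₁pos : 0 < t₁ := hτpos.trans_le ht₁.1
  have hlt : t₁ < t₀ := by
    refine lt_of_le_of_ne ht₁.2 fun h => ?_
    rw [h] at hft₁
    exact absurd hft₁ (not_lt.2 hft₀)
  have hρ := hball (y := t₁) (by
    rw [Real.dist_eq, abs_lt]; constructor <;> linarith [ht₁.1])
  have hint := intervalIntegrable_sub_rpow_mul_falpha (v := v) ha ht₀pos
  have hint1 := hint.mono_set (c := 0) (d := t₁)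
    (by rw [uIcc_of_le ht₁pos.le, uIcc_of_le ht₀pos.le]; exact Icc_subset_Icc_right hlt.le)
  have hint2 := hint.mono_set (c := t₁) (d := t₀)
    (by rw [uIcc_of_le hlt.le, uIcc_of_le ht₀pos.le]; exact Icc_subset_Icc_left ht₁pos.le)
  have hsplit := intervalIntegral.integral_add_adjacent_intervals hint1 hint2
  have hI1 := integral_kernel_compare ha ha1 ht₁pos hlt
    fun s hs => (hbefore s hs.1 (hs.2.trans hlt)).le
  have hker : ∫ s in t₁..t₀, (t₀ - s) ^ (a - 1) = (t₀ - t₁) ^ a / a := by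
    rw [intervalIntegral.integral_comp_sub_left (fun u => u ^ (a - 1)) t₀, sub_self,
      integral_rpow (Or.inl (by linarith))]
    simp [Real.zero_rpow ha.ne']
  have hkint : IntervalIntegrable (fun s => (t₀ - s) ^ (a - 1)) volume t₁ t₀ := by
    by_contra h
    have h0 := intervalIntegral.integral_undef h
    rw [hker] at h0
    have : 0 < (t₀ - t₁) ^ a := Real.rpow_pos_of_pos (sub_pos.2 hlt) _
    exact absurd h0 (by positivity)
  have hI2 : ∫ s in t₁..t₀, (t₀ - s) ^ (a - 1) * falpha a v s
      ≤ (t₀ - t₁) ^ a / a * falpha a v t₁ := by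
    rw [← hker, ← intervalIntegral.integral_mul_const]
    refine intervalIntegral.integral_mono_on hlt.le hint2 (hkint.mul_const _) fun s hs => ?_
    exact mul_le_mul_of_nonneg_left (hmax ⟨ht₁.1.trans hs.1, hs.2⟩)
      (Real.rpow_nonneg (sub_nonneg.2 hs.2) _)
  -- with `ρ = (t₀ / t₁) ^ (a - 1)` and `h = t₀ - t₁`, the two estimates give
  -- `f t₀ ≥ f t₁ * (ρ - c * h ^ a / a) > 0`
  have hV0 := falpha_volterra (v := v) ha ht₀pos
  have hV1 := falpha_volterra (v := v) ha ht₁pos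
  rw [← hc] at hV0 hV1
  have hρt : (t₀ / t₁) ^ (a - 1) * t₁ ^ (a - 1) = t₀ ^ (a - 1) := by
    rw [← Real.mul_rpow (by positivity) ht₁pos.le, div_mul_cancel₀ _ ht₁pos.ne']
  obtain ⟨ρ, hρdef⟩ : ∃ ρ, ρ = (t₀ / t₁) ^ (a - 1) := ⟨_, rfl⟩
  rw [← hρdef] at hρt hρ hI1
  have e1 := mul_le_mul_of_nonneg_left hI1 hc0.le
  have e2 := mul_le_mul_of_nonneg_left hI2 hc0.le
  have e3 := mul_pos (sub_pos.2 hρ) hft₁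
  have e4 : c * t₀ ^ (a - 1) - ρ * falpha a v t₁
      = c * (ρ * ∫ s in (0:ℝ)..t₁, (t₁ - s) ^ (a - 1) * falpha a v s) := by
    rw [← hρt]; linear_combination (-ρ) * hV1
  rw [← hsplit] at hV0
  linarith

/-! ### The Laplace transform -/

lemma integral_exp_mul_rpow {a z : ℝ} (ha : 0 < a) (hz : 0 < z) :
    ∫ x in Ioi (0:ℝ), Real.exp (-z * x) * x ^ (a - 1) = (1 / z) ^ a * Real.Gamma a := by
  rw [← Real.integral_rpow_mul_exp_neg_mul_Ioi ha hz]
  refine integral_congr_ae (Eventually.of_forall fun x => ?_)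
  simp only [neg_mul]
  ring

lemma integrableOn_exp_mul_rpow {a z : ℝ} (ha : 0 < a) (hz : 0 < z) :
    IntegrableOn (fun x => Real.exp (-z * x) * x ^ (a - 1)) (Ioi 0) := by
  by_contra h
  have h0 := integral_undef h
  rw [integral_exp_mul_rpow ha hz] at h0
  have := Real.Gamma_pos_of_pos ha
  exact absurd h0 (by positivity)

/-- Dropping the nonnegative memory term in the Volterra equation. -/
lemma falpha_le {a v t : ℝ} (ha : 0 < a) (ha1 : a < 1) (hv : 0 < v) (ht : 0 < t) :
    falpha a v t ≤ v / Real.Gamma a * t ^ (a - 1) := by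
  rw [falpha_volterra ha ht]
  have hG := Real.Gamma_pos_of_pos ha
  have : 0 ≤ ∫ s in (0:ℝ)..t, (t - s) ^ (a - 1) * falpha a v s := by
    rw [intervalIntegral.integral_of_le ht.le]
    exact setIntegral_nonneg measurableSet_Ioc fun s hs =>
      mul_nonneg (Real.rpow_nonneg (sub_nonneg.2 hs.2) _) (falpha_pos ha ha1 hv hs.1).le
  have : 0 ≤ v / Real.Gamma a * ∫ s in (0:ℝ)..t, (t - s) ^ (a - 1) * falpha a v s := by positivity
  linarith

lemma integrableOn_exp_mul_falpha {a v z : ℝ} (ha : 0 < a) (ha1 : a < 1) (hv : 0 < v)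
    (hz : 0 < z) : IntegrableOn (fun x => Real.exp (-z * x) * falpha a v x) (Ioi 0) := by
  refine ((integrableOn_exp_mul_rpow ha hz).const_mul (v / Real.Gamma a)).mono' ?_ ?_
  · exact (Continuous.aestronglyMeasurable (by fun_prop)).mul (aestronglyMeasurable_falpha ha)
  · filter_upwards [ae_restrict_mem measurableSet_Ioi] with x hx
    have h1 := falpha_pos ha ha1 hv hx
    have h2 := falpha_le ha ha1 hv hx
    rw [Real.norm_of_nonneg (by positivity)]
    have := mul_le_mul_of_nonneg_left h2 (Real.exp_pos (-z * x)).le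
    linarith

/-- The Laplace transform turns the Volterra equation into a linear equation for the
transform of `falpha a v`. -/
lemma integral_exp_mul_falpha {a v z : ℝ} (ha : 0 < a) (ha1 : a < 1) (hv : 0 < v) (hz : 0 < z) :
    ∫ x in Ioi (0:ℝ), Real.exp (-z * x) * falpha a v x = v / (v + z ^ a) := by
  have hG := Real.Gamma_pos_of_pos ha
  have hf := integrableOn_exp_mul_falpha ha ha1 hv hz
  have hk := integrableOn_exp_mul_rpow ha hz
  have hconv := integral_posConvolution hf hk (ContinuousLinearMap.mul ℝ ℝ)
  simp only [ContinuousLinearMap.mul_apply'] at hconv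
  have hpt : ∀ x ∈ Ioi (0:ℝ), (∫ s in (0:ℝ)..x, Real.exp (-z * s) * falpha a v s *
      (Real.exp (-z * (x - s)) * (x - s) ^ (a - 1))) =
      Real.exp (-z * x) * x ^ (a - 1) -
        Real.Gamma a / v * (Real.exp (-z * x) * falpha a v x) := by
    intro x hx
    have h1 : (∫ s in (0:ℝ)..x, Real.exp (-z * s) * falpha a v s *
      (Real.exp (-z * (x - s)) * (x - s) ^ (a - 1))) =
        Real.exp (-z * x) * ∫ s in (0:ℝ)..x, (x - s) ^ (a - 1) * falpha a v s := by
      rw [← intervalIntegral.integral_const_mul]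
      refine intervalIntegral.integral_congr fun s _ => ?_
      have : Real.exp (-z * x) = Real.exp (-z * s) * Real.exp (-z * (x - s)) := by
        rw [← Real.exp_add]; ring_nf
      simp only [this]
      ring
    have hV := falpha_volterra (v := v) ha hx
    rw [h1, hV]
    field_simp
    ring
  rw [setIntegral_congr_fun measurableSet_Ioi hpt, integral_sub hk (hf.const_mul _),
    integral_const_mul, integral_exp_mul_rpow ha hz, one_div, Real.inv_rpow hz.le] at hconv
  obtain ⟨L, hL⟩ : ∃ L, L = ∫ x in Ioi (0:ℝ), Real.exp (-z * x) * falpha a v x := ⟨_, rfl⟩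
  rw [← hL] at hconv ⊢
  have hza : 0 < z ^ a := Real.rpow_pos_of_pos hz a
  rw [eq_div_iff (by positivity)]
  field_simp at hconv
  linarith

/-- Fatou's lemma as `z → 0`: the Laplace transforms at `z > 0` are bounded by `1`. -/
lemma integrableOn_falpha {a v : ℝ} (ha : 0 < a) (ha1 : a < 1) (hv : 0 < v) :
    IntegrableOn (falpha a v) (Ioi 0) := by
  have hn : ∀ n : ℕ, (0:ℝ) < 1 / (n + 1) := fun n => by positivity
  refine integrable_of_tendsto
    (G := fun n x => Real.exp (-(1 / ((n : ℝ) + 1)) * x) * falpha a v x)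
    (Eventually.of_forall fun x => ?_)
    (fun n => (integrableOn_exp_mul_falpha ha ha1 hv (hn n)).1) ?_
  · have h : Tendsto (fun n : ℕ => Real.exp (-(1 / ((n : ℝ) + 1)) * x)) atTop (nhds 1) := by
      have := (Real.continuous_exp.tendsto _).comp
        ((tendsto_one_div_add_atTop_nhds_zero_nat (𝕜 := ℝ)).neg.mul_const x)
      simpa [Function.comp_def] using this
    simpa using h.mul_const (falpha a v x)
  · refine ne_top_of_le_ne_top ENNReal.one_ne_top ?_
    rw [← liminf_const (f := atTop (α := ℕ)) (1 : ENNReal)]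
    refine liminf_le_liminf (Eventually.of_forall fun n => ?_)
    rw [← ofReal_integral_norm_eq_lintegral_enorm (integrableOn_exp_mul_falpha ha ha1 hv (hn n))]
    rw [ENNReal.ofReal_le_one, setIntegral_congr_fun measurableSet_Ioi
      (fun x hx => Real.norm_of_nonneg
        (mul_nonneg (Real.exp_pos _).le (falpha_pos ha ha1 hv hx).le)),
      integral_exp_mul_falpha ha ha1 hv (hn n)]
    have := Real.rpow_pos_of_pos (hn n) a
    rw [div_le_one (by positivity)]
    linarith

/-- The limit `z → 0` of the Laplace transform, by dominated convergence. -/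
lemma integral_falpha {a v : ℝ} (ha : 0 < a) (ha1 : a < 1) (hv : 0 < v) :
    ∫ x in Ioi (0:ℝ), falpha a v x = 1 := by
  have hn : ∀ n : ℕ, (0:ℝ) < 1 / (n + 1) := fun n => by positivity
  have h0 := tendsto_one_div_add_atTop_nhds_zero_nat (𝕜 := ℝ)
  have hlim1 : Tendsto
      (fun n : ℕ => ∫ x in Ioi (0:ℝ), Real.exp (-(1 / ((n : ℝ) + 1)) * x) * falpha a v x) atTop
      (nhds (∫ x in Ioi (0:ℝ), falpha a v x)) := by
    refine tendsto_integral_of_dominated_convergence (falpha a v)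
      (fun n => (integrableOn_exp_mul_falpha ha ha1 hv (hn n)).1)
      (integrableOn_falpha ha ha1 hv) (fun n => ?_) (Eventually.of_forall fun x => ?_)
    · filter_upwards [ae_restrict_mem measurableSet_Ioi] with x hx
      have h1 := falpha_pos ha ha1 hv hx
      rw [Real.norm_of_nonneg (by positivity)]
      refine mul_le_of_le_one_left h1.le (Real.exp_le_one_iff.2 ?_)
      have := mul_nonneg (hn n).le (le_of_lt hx)
      linarith
    · have := ((Real.continuous_exp.tendsto _).comp (h0.neg.mul_const x)).mul_const (falpha a v x)
      simpa using this
  have hlim2 : Tendsto (fun n : ℕ => v / (v + (1 / ((n : ℝ) + 1)) ^ a)) atTop (nhds 1) := by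
    have h1 := ((Real.continuous_rpow_const ha.le).tendsto 0).comp h0
    rw [Real.zero_rpow ha.ne'] at h1
    have := (tendsto_const_nhds (x := v)).div (h1.const_add v) (by simpa using hv.ne')
    simpa [hv.ne', Pi.div_def] using this
  refine tendsto_nhds_unique hlim1 (hlim2.congr fun n => ?_)
  exact (integral_exp_mul_falpha ha ha1 hv (hn n)).symm

/-- for `α ∈ (0,1)` and `v > 0`, the Laplace transform of
`x ↦ v x^{α-1} E_{α,α}(-v x^α)` on `(0,∞)` is `v / (v + z^α)` for every `z ≥ 0`;
in particular this function is a probability density on `(0,∞)`. -/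
theorem laplace_mittagLeffler_density (α v : ℝ) (hα : α ∈ Set.Ioo (0:ℝ) 1) (hv : 0 < v) :
    (∀ z : ℝ, 0 ≤ z →
      (∫ x in Set.Ioi (0:ℝ), Real.exp (-z * x) * (v * x ^ (α - 1) * mlf α α (-v * x ^ α)))
        = v / (v + z ^ α)) ∧
    (∀ x ∈ Set.Ioi (0:ℝ), 0 ≤ v * x ^ (α - 1) * mlf α α (-v * x ^ α)) ∧
    (∫ x in Set.Ioi (0:ℝ), v * x ^ (α - 1) * mlf α α (-v * x ^ α)) = 1 := by

  obtain ⟨ha, ha1⟩ := hα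
  refine ⟨fun z hz => ?_, fun x hx => (falpha_pos ha ha1 hv hx).le, integral_falpha ha ha1 hv⟩
  rcases hz.eq_or_lt with rfl | hz
  · rw [Real.zero_rpow ha.ne', add_zero, div_self hv.ne']
    simp only [neg_zero, zero_mul, Real.exp_zero, one_mul]
    exact integral_falpha ha ha1 hv
  · exact integral_exp_mul_falpha ha ha1 hv hz
end

section
/- Let α ∈ (0,1) and λ > 0. The function f^{α,λ} is infinitely differentiable on (0,1], and as x → 0+ one has f^{α,λ}(x) ∼ (λ/Γ(α)) x^{α−1} and (f^{α,λ})'(x) ∼ (λ(α−1)/Γ(α)) x^{α−2} (i.e. the ratios tend to 1). -/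
/-!
The substance is that `E_{α,β}` is entire. Cutting Euler's integral for `Γ(s)` at any `K > 0` gives
`Γ(s) ≥ K^{s-1} e^{-K}` for `s ≥ 1`, so `Γ(α n + β)` eventually dominates a multiple of `(K^α)^n`;
as `K^α` can be made as large as desired, the power series has infinite radius of convergence
(`mlf_coeff_radius`).

Smoothness of `f^{α,λ}` away from `0` follows by composition with powers of `x`. Write
`u = -λ x^α`, which tends to `0` with `x`. Then the first ratio is `Γ(α) E_{α,α}(u)`, and by the
product rule the second one is `Γ(α) E_{α,α}(u) + (α Γ(α) / (α - 1)) u E_{α,α}'(u)`. Since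
`E_{α,α}(0) = 1 / Γ(α)` and `E_{α,α}'` is continuous at `0`, both tend to `1`.
-/


open MeasureTheory Filter Set

/-- Cutting Euler's integral at `K` gives a bound on `Γ(s)` that is geometric in `s`, with
arbitrarily large ratio `K`. -/
lemma rpow_mul_exp_neg_le_Gamma {s K : ℝ} (hs : 1 ≤ s) (hK : 0 < K) :
    K ^ (s - 1) * Real.exp (-K) ≤ Real.Gamma s := by
  have hint := Real.GammaIntegral_convergent (s := s) (by linarith)
  rw [Real.Gamma_eq_integral (by linarith), ← integral_exp_neg_Ioi K, ← integral_const_mul]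
  calc ∫ x in Ioi K, K ^ (s - 1) * Real.exp (-x)
      ≤ ∫ x in Ioi K, Real.exp (-x) * x ^ (s - 1) := by
        refine setIntegral_mono_on ?_ (hint.mono_set (Ioi_subset_Ioi hK.le))
          measurableSet_Ioi ?_
        · exact (integrableOn_exp_neg_Ioi K).const_mul _
        · intro x hx
          rw [mul_comm]
          have : K ^ (s - 1) ≤ x ^ (s - 1) :=
            Real.rpow_le_rpow hK.le (le_of_lt hx) (by linarith)
          gcongr
    _ ≤ ∫ x in Ioi 0, Real.exp (-x) * x ^ (s - 1) := by
        refine setIntegral_mono_set hint ?_ (Ioi_subset_Ioi hK.le).eventuallyLE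
        filter_upwards [ae_restrict_mem measurableSet_Ioi] with x hx
        have : (0:ℝ) < x := hx
        simp only [Pi.zero_apply]
        positivity

lemma mlf_coeff_radius {a b : ℝ} (ha : 0 < a) :
    (FormalMultilinearSeries.ofScalars ℝ
      (fun n : ℕ => (Real.Gamma (a * n + b))⁻¹)).radius = ⊤ := by
  refine ENNReal.eq_top_of_forall_nnreal_le fun r => ?_
  -- `K ^ a ≥ r`, so the lower bound for `Γ (a n + b)` beats `r ^ n`.
  set K : ℝ := (r + 1 : ℝ) ^ a⁻¹ with hKdef
  have hr : (0:ℝ) ≤ r := r.2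
  have hK : 0 < K := by positivity
  have hKa : K ^ a = r + 1 := by
    rw [hKdef, ← Real.rpow_mul (by positivity), inv_mul_cancel₀ ha.ne', Real.rpow_one]
  refine FormalMultilinearSeries.le_radius_of_isBigO _ ?_
  refine Asymptotics.IsBigO.of_bound (K ^ (1 - b) * Real.exp K) ?_
  have hev : ∀ᶠ n : ℕ in atTop, 1 ≤ a * n + b :=
    (tendsto_atTop_add_const_right _ _
      (tendsto_natCast_atTop_atTop.const_mul_atTop ha)).eventually_ge_atTop 1
  filter_upwards [hev] with n hn
  have h1 := rpow_mul_exp_neg_le_Gamma hn hK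
  have hG : 0 < Real.Gamma (a * n + b) := Real.Gamma_pos_of_pos (by linarith)
  have h2 : K ^ (a * n + b - 1) = (r + 1 : ℝ) ^ n * (K ^ (1 - b))⁻¹ := by
    rw [← hKa, ← Real.rpow_natCast, ← Real.rpow_mul hK.le, ← Real.rpow_neg hK.le,
      ← Real.rpow_add hK]
    congr 1; ring
  have h3 : (r : ℝ) ^ n ≤ (r + 1 : ℝ) ^ n := by gcongr; linarith
  rw [FormalMultilinearSeries.ofScalars_norm, Real.norm_of_nonneg (by positivity),
    Real.norm_of_nonneg (by positivity), norm_one, mul_one, inv_mul_le_iff₀ hG]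
  rw [h2, Real.exp_neg] at h1
  have hKb : 0 < K ^ (1 - b) := by positivity
  calc (r : ℝ) ^ n ≤ (r + 1 : ℝ) ^ n := h3
    _ = ((r + 1 : ℝ) ^ n * (K ^ (1 - b))⁻¹ * (Real.exp K)⁻¹) * (K ^ (1 - b) * Real.exp K) := by
        field_simp
    _ ≤ _ := by gcongr

lemma mlf_contDiff {a b : ℝ} (ha : 0 < a) : ContDiff ℝ (⊤ : ℕ∞) (mlf a b) := by
  have hrad := mlf_coeff_radius (b := b) ha
  have h := FormalMultilinearSeries.hasFPowerSeriesOnBall _ (hrad ▸ ENNReal.zero_lt_top)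
  rw [hrad] at h
  have hsum : (FormalMultilinearSeries.ofScalars ℝ
      (fun n : ℕ => (Real.Gamma (a * n + b))⁻¹)).sum = mlf a b := by
    ext z
    rw [mlf, ← FormalMultilinearSeries.ofScalarsSum, FormalMultilinearSeries.ofScalars_sum_eq]
    simp [div_eq_inv_mul]
  rw [hsum] at h
  have han : AnalyticOnNhd ℝ (mlf a b) univ := fun z _ =>
    h.analyticOnNhd z (by simp)
  exact han.contDiff

lemma mlf_zero (a b : ℝ) : mlf a b 0 = (Real.Gamma b)⁻¹ := by
  rw [mlf, tsum_eq_single 0 (by intro n hn; simp [hn])]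
  simp

/-- `f^{α,λ}` is `C^∞` on `(0,1]`, `f^{α,λ}(x) ∼ (λ/Γ(α)) x^{α-1}` and
`(f^{α,λ})'(x) ∼ (λ(α-1)/Γ(α)) x^{α-2}` as `x → 0+`. -/
theorem falpha_smooth_and_asymptotics (α lam : ℝ) (hα : α ∈ Set.Ioo (0:ℝ) 1)
    (hlam : 0 < lam) :
    ContDiffOn ℝ (⊤ : ℕ∞) (falpha α lam) (Set.Ioc 0 1) ∧
    Filter.Tendsto (fun x => falpha α lam x / (lam / Real.Gamma α * x ^ (α - 1)))
      (nhdsWithin 0 (Set.Ioi 0)) (nhds 1) ∧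
    Filter.Tendsto
      (fun x => deriv (falpha α lam) x / (lam * (α - 1) / Real.Gamma α * x ^ (α - 2)))
      (nhdsWithin 0 (Set.Ioi 0)) (nhds 1) := by
  obtain ⟨hα0, hα1⟩ := hα
  have hE : ContDiff ℝ (⊤ : ℕ∞) (mlf α α) := mlf_contDiff hα0
  have hG : 0 < Real.Gamma α := Real.Gamma_pos_of_pos hα0
  have hα1' : α - 1 ≠ 0 := by linarith
  have hu : Tendsto (fun x : ℝ => -lam * x ^ α) (nhdsWithin 0 (Ioi 0)) (nhds 0) := by
    have h : ContinuousAt (fun x : ℝ => -lam * x ^ α) 0 :=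
      continuousAt_const.mul (Real.continuousAt_rpow_const 0 α (Or.inr hα0.le))
    simpa [Real.zero_rpow hα0.ne'] using h.tendsto.mono_left nhdsWithin_le_nhds
  have hEu : Tendsto (fun x : ℝ => mlf α α (-lam * x ^ α)) (nhdsWithin 0 (Ioi 0))
      (nhds (Real.Gamma α)⁻¹) := by
    rw [← mlf_zero α α]
    exact (hE.continuous.tendsto 0).comp hu
  have hE'u : Tendsto (fun x : ℝ => deriv (mlf α α) (-lam * x ^ α)) (nhdsWithin 0 (Ioi 0))
      (nhds (deriv (mlf α α) 0)) :=
    ((hE.continuous_deriv (by simp)).tendsto 0).comp hu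
  refine ⟨?_, ?_, ?_⟩
  · have hpow : ∀ p : ℝ, ContDiffOn ℝ (⊤ : ℕ∞) (fun x : ℝ => x ^ p) (Ioc 0 1) := fun p x hx =>
      (Real.contDiffAt_rpow_const_of_ne hx.1.ne').contDiffWithinAt
    exact (contDiffOn_const.mul (hpow _)).mul
      (hE.comp_contDiffOn (contDiffOn_const.mul (hpow _)))
  · have h := hEu.const_mul (Real.Gamma α)
    rw [mul_inv_cancel₀ hG.ne'] at h
    refine h.congr' ?_
    filter_upwards [self_mem_nhdsWithin] with x hx
    have hx' : 0 < x ^ (α - 1) := Real.rpow_pos_of_pos hx _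
    rw [falpha]
    field_simp
  · have h := (hEu.const_mul (Real.Gamma α)).add
      ((hE'u.mul hu).const_mul (Real.Gamma α * α / (α - 1)))
    rw [mul_inv_cancel₀ hG.ne', mul_zero, mul_zero, add_zero] at h
    refine h.congr' ?_
    filter_upwards [self_mem_nhdsWithin] with x hx
    have hx0 : (0:ℝ) < x := hx
    have hdu : HasDerivAt (fun y : ℝ => -lam * y ^ α) (-lam * (α * x ^ (α - 1))) x :=
      (Real.hasDerivAt_rpow_const (Or.inl hx0.ne')).const_mul (-lam)
    have hdE : HasDerivAt (fun y : ℝ => mlf α α (-lam * y ^ α))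
        (deriv (mlf α α) (-lam * x ^ α) * (-lam * (α * x ^ (α - 1)))) x :=
      HasDerivAt.comp (h₂ := mlf α α) x
        ((hE.differentiable (by simp)) (-lam * x ^ α)).hasDerivAt hdu
    have hd : HasDerivAt (falpha α lam) _ x :=
      ((Real.hasDerivAt_rpow_const (p := α - 1) (Or.inl hx0.ne')).const_mul lam).mul hdE
    rw [hd.deriv]
    have e1 : x ^ (α - 1) = x ^ (α - 2) * x := by
      rw [← Real.rpow_add_one hx0.ne']; congr 1; ring
    have e2 : x ^ α = x ^ (α - 2) * x * x := by
      rw [← Real.rpow_add_one hx0.ne', ← Real.rpow_add_one hx0.ne']; congr 1; ring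
    have e3 : x ^ (α - 1 - 1) = x ^ (α - 2) := by congr 1; ring
    have hx' : 0 < x ^ (α - 2) := Real.rpow_pos_of_pos hx0 _
    rw [e3, e1]
    generalize mlf α α (-lam * x ^ α) = A
    generalize deriv (mlf α α) (-lam * x ^ α) = B
    rw [e2]
    field_simp
end

section
/- Let K > 0, β ∈ (0,1), let f be a differentiable function on (0,1] with |f(x)| ≤ K x^{−β} and |f'(x)| ≤ K x^{−β−1} for all x ∈ (0,1], and let g be a continuous function on [0,1]. Then the convolution f ∗ g(t) = ∫_0^t f(t−s) g(s) ds has Hölder regularity 1−β on [0,1]. -/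
/-!
Write `F t = ∫ s in 0..t, f (t - s) * g s` and fix `0 ≤ u < t ≤ 1`. Then
`F t - F u = ∫ s in 0..u, (f (t - s) - f (u - s)) * g s + ∫ s in u..t, f (t - s) * g s`.
With `|g| ≤ M`, the bound on `f` controls the second integral by
`M * K * ∫ s in u..t, (t - s) ^ (-β) = M * K / (1 - β) * (t - u) ^ (1 - β)`.
For the first one, the bound on `f'` integrates to
`|f b - f a| ≤ K / β * (a ^ (-β) - b ^ (-β))` for `0 < a ≤ b ≤ 1` (`abs_sub_le_of_deriv_bound`).
The right-hand side, at `a = u - s` and `b = t - s`, is integrable up to `s = u`, and its integral is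
`K / (β * (1 - β)) * (u ^ (1 - β) - t ^ (1 - β) + (t - u) ^ (1 - β))`, where `u ≤ t` makes the first
two powers contribute at most `0`. So no splitting at distance `t - u` from the singularity is
needed.
-/

open MeasureTheory Filter Set

/-- Integrated form of the derivative bound: `x ↦ -(K / β) * x ^ (-β)` has derivative
`K * x ^ (-β - 1)`, hence its increments dominate those of `f`. -/
lemma abs_sub_le_of_deriv_bound {K β : ℝ} (hβ : 0 < β) {f : ℝ → ℝ}
    (hf : ∀ x ∈ Set.Ioc (0:ℝ) 1, DifferentiableAt ℝ f x)
    (hfb' : ∀ x ∈ Set.Ioc (0:ℝ) 1, |deriv f x| ≤ K * x ^ (-β - 1))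
    {a b : ℝ} (ha : 0 < a) (hab : a ≤ b) (hb : b ≤ 1) :
    |f b - f a| ≤ K / β * (a ^ (-β) - b ^ (-β)) := by
  have hB : ∀ x ∈ Icc a b, HasDerivAt (fun x => K / β * (a ^ (-β) - x ^ (-β)))
      (K * x ^ (-β - 1)) x := by
    intro x hx
    have h := ((Real.hasDerivAt_rpow_const (x := x) (p := -β)
      (Or.inl (ha.trans_le hx.1).ne')).const_sub (a ^ (-β))).const_mul (K / β)
    have e : K / β * -(-β * x ^ (-β - 1)) = K * x ^ (-β - 1) := by field_simp
    exact e ▸ h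
  have hF : ∀ x ∈ Icc a b, HasDerivAt (fun x => f x - f a) (deriv f x) x := fun x hx =>
    (hf x ⟨ha.trans_le hx.1, hx.2.trans hb⟩).hasDerivAt.sub_const _
  have key := image_norm_le_of_norm_deriv_right_le_deriv_boundary'
    (f := fun x => f x - f a) (f' := deriv f) (a := a) (b := b)
    (B := fun x => K / β * (a ^ (-β) - x ^ (-β))) (B' := fun x => K * x ^ (-β - 1))
    (fun x hx => (hF x hx).continuousAt.continuousWithinAt)
    (fun x hx => (hF x (Ico_subset_Icc_self hx)).hasDerivWithinAt)
    (by simp)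
    (fun x hx => (hB x hx).continuousAt.continuousWithinAt)
    (fun x hx => (hB x (Ico_subset_Icc_self hx)).hasDerivWithinAt)
    (fun x hx => hfb' x ⟨ha.trans_le hx.1, hx.2.le.trans hb⟩)
  exact key (right_mem_Icc.2 hab)

lemma intervalIntegrable_sub_rpow {β : ℝ} (hβ : β < 1) (c a b : ℝ) :
    IntervalIntegrable (fun s => (c - s) ^ (-β)) volume a b := by
  have h := (intervalIntegral.intervalIntegrable_rpow' (a := c - a) (b := c - b)
    (r := -β) (by linarith)).comp_sub_left c
  simpa using h

lemma integral_sub_rpow {β : ℝ} (hβ : β < 1) (c a b : ℝ) :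
    ∫ s in a..b, (c - s) ^ (-β) = ((c - a) ^ (1 - β) - (c - b) ^ (1 - β)) / (1 - β) := by
  rw [intervalIntegral.integral_comp_sub_left (fun x => x ^ (-β)) c,
    integral_rpow (Or.inl (by linarith))]
  rw [show -β + 1 = 1 - β by ring]

/-- if `f` is differentiable on `(0,1]` with `|f(x)| ≤ K x^{-β}` and
`|f'(x)| ≤ K x^{-β-1}` there, and `g` is continuous on `[0,1]`, then
`t ↦ ∫_0^t f(t-s) g(s) ds` has Hölder regularity `1-β` on `[0,1]`. -/
theorem convolution_power_holder (K β : ℝ) (hK : 0 < K) (hβ : β ∈ Set.Ioo (0:ℝ) 1)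
    (f g : ℝ → ℝ)
    (hf : ∀ x ∈ Set.Ioc (0:ℝ) 1, DifferentiableAt ℝ f x)
    (hfb : ∀ x ∈ Set.Ioc (0:ℝ) 1, |f x| ≤ K * x ^ (-β))
    (hfb' : ∀ x ∈ Set.Ioc (0:ℝ) 1, |deriv f x| ≤ K * x ^ (-β - 1))
    (hg : ContinuousOn g (Set.Icc 0 1)) :
    HolderOn (fun t => ∫ s in (0:ℝ)..t, f (t - s) * g s) (1 - β) (Set.Icc 0 1) := by
  obtain ⟨hβ0, hβ1⟩ := hβ
  have hβ' : 0 < 1 - β := by linarith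
  obtain ⟨M, hM0, hM⟩ : ∃ M > 0, ∀ s ∈ Icc (0:ℝ) 1, |g s| ≤ M := by
    obtain ⟨M, hM⟩ := isCompact_Icc.exists_bound_of_continuousOn hg
    exact ⟨max M 1, by positivity, fun s hs => (hM s hs).trans (le_max_left _ _)⟩
  -- Almost every `s` avoids the singularity of the kernel at `s = t`.
  have hae : ∀ t : ℝ, ∀ᵐ s : ℝ, s ≠ t := fun t => by simp [ae_iff]
  have hbd : ∀ t ≤ 1, ∀ s, 0 ≤ s → s < t →
      |f (t - s) * g s| ≤ M * K * (t - s) ^ (-β) := by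
    intro t ht s hs0 hst
    rw [abs_mul]
    have h1 := hfb (t - s) ⟨by linarith, by linarith⟩
    have h2 := hM s ⟨hs0, by linarith⟩
    calc _ ≤ (K * (t - s) ^ (-β)) * M := by gcongr
      _ = _ := by ring
  have hint : ∀ t, 0 ≤ t → t ≤ 1 →
      IntervalIntegrable (fun s => f (t - s) * g s) volume 0 t := by
    intro t ht0 ht1
    refine ((intervalIntegrable_sub_rpow hβ1 t 0 t).const_mul (M * K)).mono_fun' ?_ ?_
    · rw [uIoc_of_le ht0, ← restrict_Ioo_eq_restrict_Ioc]
      refine ContinuousOn.aestronglyMeasurable (fun s hs => ?_) measurableSet_Ioo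
      refine ContinuousWithinAt.mul ?_ ?_
      · have hc := (hf (t - s) ⟨by linarith [hs.2], by linarith [hs.1]⟩).continuousAt
        exact (ContinuousAt.comp (f := fun s => t - s) hc (by fun_prop)).continuousWithinAt
      · exact (hg s ⟨hs.1.le, hs.2.le.trans ht1⟩).mono
          fun r hr => ⟨hr.1.le, hr.2.le.trans ht1⟩
    · rw [uIoc_of_le ht0]
      filter_upwards [ae_restrict_mem measurableSet_Ioc, ae_restrict_of_ae (hae t)] with s hs hst
      exact hbd t ht1 s hs.1.le (lt_of_le_of_ne hs.2 hst)
  have main : ∀ u t, 0 ≤ u → u ≤ t → t ≤ 1 →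
      |(∫ s in (0:ℝ)..t, f (t - s) * g s) - ∫ s in (0:ℝ)..u, f (u - s) * g s|
        ≤ M * K / (1 - β) * (1 + 1 / β) * (t - u) ^ (1 - β) := by
    intro u t hu hut ht
    have ht0 := hu.trans hut
    have hi := hint t ht0 ht
    have hi1 : IntervalIntegrable (fun s => f (t - s) * g s) volume 0 u :=
      hi.mono_set (by rw [uIcc_of_le hu, uIcc_of_le ht0]; exact Icc_subset_Icc le_rfl hut)
    have hi2 : IntervalIntegrable (fun s => f (t - s) * g s) volume u t :=
      hi.mono_set (by rw [uIcc_of_le hut, uIcc_of_le ht0]; exact Icc_subset_Icc hu le_rfl)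
    have hiu := hint u hu (hut.trans ht)
    have hsplit : (∫ s in (0:ℝ)..t, f (t - s) * g s) - ∫ s in (0:ℝ)..u, f (u - s) * g s
        = (∫ s in (0:ℝ)..u, (f (t - s) * g s - f (u - s) * g s))
          + ∫ s in u..t, f (t - s) * g s := by
      rw [intervalIntegral.integral_sub hi1 hiu,
        ← intervalIntegral.integral_add_adjacent_intervals hi1 hi2]
      ring
    have hnear : |∫ s in u..t, f (t - s) * g s| ≤ M * K / (1 - β) * (t - u) ^ (1 - β) := by
      have h := intervalIntegral.norm_integral_le_of_norm_le hut
        (f := fun s => f (t - s) * g s) (g := fun s => M * K * (t - s) ^ (-β)) (by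
          filter_upwards [hae t] with s hst hs
          exact hbd t ht s (hu.trans hs.1.le) (lt_of_le_of_ne hs.2 hst))
        ((intervalIntegrable_sub_rpow hβ1 t u t).const_mul _)
      rw [intervalIntegral.integral_const_mul, integral_sub_rpow hβ1, sub_self,
        Real.zero_rpow hβ'.ne', sub_zero, Real.norm_eq_abs] at h
      exact h.trans_eq (by ring)
    have hfar : |∫ s in (0:ℝ)..u, (f (t - s) * g s - f (u - s) * g s)|
        ≤ M * K / (1 - β) * (1 / β) * (t - u) ^ (1 - β) := by
      have h := intervalIntegral.norm_integral_le_of_norm_le hu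
        (f := fun s => f (t - s) * g s - f (u - s) * g s)
        (g := fun s => M * (K / β) * ((u - s) ^ (-β) - (t - s) ^ (-β))) (by
          filter_upwards [hae u] with s hsu hs
          have hlt : s < u := lt_of_le_of_ne hs.2 hsu
          have h1 := abs_sub_le_of_deriv_bound hβ0 hf hfb' (a := u - s) (b := t - s)
            (by linarith) (by linarith) (by linarith [hs.1])
          have h2 := hM s ⟨hs.1.le, by linarith⟩
          rw [← sub_mul, Real.norm_eq_abs, abs_mul]
          calc _ ≤ (K / β * ((u - s) ^ (-β) - (t - s) ^ (-β))) * M := by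
                gcongr; exact (abs_nonneg _).trans h1
            _ = _ := by ring)
        (((intervalIntegrable_sub_rpow hβ1 u 0 u).sub
          (intervalIntegrable_sub_rpow hβ1 t 0 u)).const_mul _)
      rw [intervalIntegral.integral_const_mul,
        intervalIntegral.integral_sub (intervalIntegrable_sub_rpow hβ1 u 0 u)
          (intervalIntegrable_sub_rpow hβ1 t 0 u),
        integral_sub_rpow hβ1, integral_sub_rpow hβ1, sub_self,
        Real.zero_rpow hβ'.ne', sub_zero, sub_zero, sub_zero, Real.norm_eq_abs] at h
      have hmono : u ^ (1 - β) ≤ t ^ (1 - β) := Real.rpow_le_rpow hu hut hβ'.le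
      calc _ ≤ _ := h
        _ = M * K / (1 - β) * (1 / β) * (u ^ (1 - β) - t ^ (1 - β) + (t - u) ^ (1 - β)) := by
          ring
        _ ≤ _ := by gcongr; linarith
    rw [hsplit]
    calc _ ≤ _ := abs_add_le _ _
      _ ≤ _ := add_le_add hfar hnear
      _ = _ := by ring
  refine ⟨M * K / (1 - β) * (1 + 1 / β), by positivity, fun x hx y hy => ?_⟩
  rcases le_total x y with h | h
  · rw [abs_sub_comm, abs_sub_comm x y, abs_of_nonneg (sub_nonneg.2 h)]
    exact main x y hx.1 h hy.2
  · rw [abs_of_nonneg (sub_nonneg.2 h)]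
    exact main y x hy.1 h hx.2
end

section
/- Let 0 < α < λ ≤ 1 and let f : [0,1] → ℝ have Hölder regularity λ on [0,1] with f(0) = 0. Then f admits a Riemann–Liouville fractional derivative of order α on [0,1] (i.e. the map x ↦ ∫_0^x f(t)(x−t)^{−α} dt is differentiable on [0,1]), and D^α f has Hölder regularity λ−α on [0,1]. -/
/-! The proof compares the Riemann–Liouville derivative with the Marchaud derivative
`α ∫_0^∞ (g x - g (x - s)) s^(-α-1) ds`, where `g` is `f` continued by `0` on the left and by `f 1`
on the right. Since `f 0 = 0`, `g` is continuous and `|g x - g y| ≤ C (min |x - y| 1)^lam` on all of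
`ℝ`, so this integral converges absolutely.

Let `G x = ∫_0^x g`. Integration by parts in `s` shows that `∫_0^y f t (y - t)^(-α) dt` is the
Marchaud integral of `G` at `y ∈ [0,1]` (`marchaud_primitive_eq`). As `G` is `C¹`, that integral can
be differentiated in `y` under the integral sign, with integrable bound `C (min s 1)^lam s^(-α-1)`,
and the result is the Marchaud integral of `g` (`hasDerivAt_marchaud_primitive`).

For the regularity (`marchaud_holder`), with `h = |x - y|`, the second difference
`(g x - g (x - s)) - (g y - g (y - s))` is at most `2 C (min s h)^lam` in absolute value, and
`∫_0^∞ (min s h)^lam s^(-α-1) ds` is a constant times `h^(lam-α)` (`kernel_integrable`). -/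

open MeasureTheory Filter Set

/-- The integrand is `s ^ (lam - α - 1)` up to `h` and a multiple of `s ^ (-α - 1)` beyond; the two
pieces contribute the summands `1 / (lam - α)` and `1 / α`. -/
lemma kernel_integrable {α lam h : ℝ} (hα : 0 < α) (hl : α < lam) (hh : 0 < h) :
    IntegrableOn (fun s : ℝ => (min s h) ^ lam * s ^ (-α - 1)) (Ioi 0) ∧
    ∫ s in Ioi (0:ℝ), (min s h) ^ lam * s ^ (-α - 1) =
      (1 / (lam - α) + 1 / α) * h ^ (lam - α) := by
  have e1 : EqOn (fun s : ℝ => s ^ (lam - α - 1))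
      (fun s : ℝ => (min s h) ^ lam * s ^ (-α - 1)) (Ioc 0 h) := by
    intro s hs
    simp only [min_eq_left hs.2]
    rw [← Real.rpow_add hs.1]; ring_nf
  have e2 : EqOn (fun s : ℝ => h ^ lam * s ^ (-α - 1))
      (fun s : ℝ => (min s h) ^ lam * s ^ (-α - 1)) (Ioi h) := by
    intro s hs
    simp only [min_eq_right (mem_Ioi.1 hs).le]
  have i1 : IntegrableOn (fun s : ℝ => s ^ (lam - α - 1)) (Ioc 0 h) := by
    rw [← intervalIntegrable_iff_integrableOn_Ioc_of_le hh.le]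
    exact intervalIntegral.intervalIntegrable_rpow' (by linarith)
  have i2 : IntegrableOn (fun s : ℝ => h ^ lam * s ^ (-α - 1)) (Ioi h) :=
    (integrableOn_Ioi_rpow_of_lt (by linarith) hh).const_mul _
  have j1 := i1.congr_fun e1 measurableSet_Ioc
  have j2 := i2.congr_fun e2 measurableSet_Ioi
  rw [← Ioc_union_Ioi_eq_Ioi hh.le]
  refine ⟨j1.union j2, ?_⟩
  rw [setIntegral_union (Ioc_disjoint_Ioi le_rfl) measurableSet_Ioi j1 j2,
    ← setIntegral_congr_fun measurableSet_Ioc e1, ← setIntegral_congr_fun measurableSet_Ioi e2,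
    ← intervalIntegral.integral_of_le hh.le, integral_rpow (Or.inl (by linarith)),
    integral_const_mul, integral_Ioi_rpow_of_lt (by linarith) hh]
  have h1 : lam - α - 1 + 1 = lam - α := by ring
  have h2 : -α - 1 + 1 = -α := by ring
  rw [h1, h2, Real.zero_rpow (by linarith), Real.rpow_sub hh, Real.rpow_neg hh.le]
  have : lam - α ≠ 0 := by linarith
  have := (Real.rpow_pos_of_pos hh α).ne'
  field_simp
  ring

/-- The Marchaud form of the fractional derivative, without the factor `1 / Γ(1 - α)`. -/
noncomputable def marchaud (α : ℝ) (g : ℝ → ℝ) (x : ℝ) : ℝ :=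
  α * ∫ s in Ioi (0:ℝ), (g x - g (x - s)) * s ^ (-α - 1)

section
variable {α lam C : ℝ} {g : ℝ → ℝ}

lemma cont_of_bound (hlam : 0 < lam)
    (hg : ∀ x y, |g x - g y| ≤ C * (min |x - y| 1) ^ lam) : Continuous g := by
  rw [continuous_iff_continuousAt]
  intro x
  rw [ContinuousAt, tendsto_iff_dist_tendsto_zero]
  refine squeeze_zero (fun _ => dist_nonneg) (fun y => hg y x) ?_
  have : Continuous fun y : ℝ => C * (min |y - x| 1) ^ lam :=
    continuous_const.mul (Continuous.rpow_const (by fun_prop) fun _ => Or.inr hlam.le)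
  simpa [Real.zero_rpow hlam.ne'] using this.tendsto x

lemma cont_kernel {p : ℝ} {u : ℝ → ℝ} (hu : Continuous u) :
    ContinuousOn (fun s : ℝ => u s * s ^ p) (Ioi 0) :=
  hu.continuousOn.mul (continuousOn_id.rpow_const fun _ hs => Or.inl (ne_of_gt hs))

lemma marchaud_bound (hg : ∀ x y, |g x - g y| ≤ C * (min |x - y| 1) ^ lam)
    (x s : ℝ) (hs : 0 < s) :
    ‖(g x - g (x - s)) * s ^ (-α - 1)‖ ≤ C * ((min s 1) ^ lam * s ^ (-α - 1)) := by
  rw [norm_mul, Real.norm_eq_abs, Real.norm_of_nonneg (Real.rpow_nonneg hs.le _), ← mul_assoc]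
  refine mul_le_mul_of_nonneg_right ?_ (Real.rpow_nonneg hs.le _)
  simpa [abs_of_pos hs] using hg x (x - s)

lemma marchaud_integrable (hα : 0 < α) (hl : α < lam)
    (hg : ∀ x y, |g x - g y| ≤ C * (min |x - y| 1) ^ lam) (x : ℝ) :
    IntegrableOn (fun s : ℝ => (g x - g (x - s)) * s ^ (-α - 1)) (Ioi 0) := by
  have hc := cont_of_bound (hα.trans hl) hg
  refine Integrable.mono' ((kernel_integrable hα hl one_pos).1.const_mul C)
    ((cont_kernel (by fun_prop)).aestronglyMeasurable measurableSet_Ioi) ?_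
  filter_upwards [ae_restrict_mem measurableSet_Ioi] with s hs
  exact marchaud_bound hg x s hs

/-- The bound on `g` is by `min |x - y| 1` rather than `|x - y|`: the Hölder part gives convergence
of the Marchaud integrals at `0`, the boundedness of the increments convergence at infinity. -/
lemma marchaud_holder (hα : 0 < α) (hl : α < lam) (hC : 0 < C)
    (hg : ∀ x y, |g x - g y| ≤ C * (min |x - y| 1) ^ lam) (x y : ℝ) :
    |marchaud α g x - marchaud α g y| ≤
      (α * (2 * C * (1 / (lam - α) + 1 / α))) * |x - y| ^ (lam - α) := by
  rcases eq_or_ne x y with rfl | hxy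
  · simp [Real.zero_rpow (sub_pos.2 hl).ne']
  have hh : 0 < |x - y| := abs_pos.2 (sub_ne_zero.2 hxy)
  have hg' : ∀ x y, |g x - g y| ≤ C * |x - y| ^ lam := fun x y => (hg x y).trans
    (mul_le_mul_of_nonneg_left (Real.rpow_le_rpow (by positivity) (min_le_left _ _)
      (hα.trans hl).le) hC.le)
  obtain ⟨ki, kv⟩ := kernel_integrable hα hl hh
  unfold marchaud
  rw [← mul_sub, abs_mul, abs_of_pos hα, mul_assoc,
    ← integral_sub (marchaud_integrable hα hl hg x) (marchaud_integrable hα hl hg y)]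
  refine mul_le_mul_of_nonneg_left ?_ hα.le
  rw [mul_assoc, ← kv, ← integral_const_mul]
  rw [← Real.norm_eq_abs]
  refine norm_integral_le_of_norm_le (ki.const_mul (2 * C)) ?_
  filter_upwards [ae_restrict_mem measurableSet_Ioi] with s hs
  have hs : 0 < s := hs
  rw [← sub_mul, norm_mul, Real.norm_of_nonneg (Real.rpow_nonneg hs.le _), ← mul_assoc]
  refine mul_le_mul_of_nonneg_right ?_ (Real.rpow_nonneg hs.le _)
  rw [Real.norm_eq_abs]
  -- The second difference is small both because `s` is and because `|x - y|` is.
  rcases min_cases s |x - y| with ⟨h, _⟩ | ⟨h, _⟩ <;> rw [h]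
  · have a := abs_le.1 (hg' x (x - s))
    have b := abs_le.1 (hg' y (y - s))
    simp only [sub_sub_cancel, abs_of_pos hs] at a b
    rw [abs_le]; constructor <;> linarith [a.1, a.2, b.1, b.2]
  · have a := abs_le.1 (hg' x y)
    have b := abs_le.1 (hg' (x - s) (y - s))
    simp only [sub_sub_sub_cancel_right] at b
    rw [abs_le]; constructor <;> linarith [a.1, a.2, b.1, b.2]

lemma primitive_hasDerivAt (hc : Continuous g) (x : ℝ) :
    HasDerivAt (fun y => ∫ t in (0:ℝ)..y, g t) (g x) x :=
  intervalIntegral.integral_hasDerivAt_right (hc.intervalIntegrable _ _)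
    (hc.stronglyMeasurableAtFilter _ _) hc.continuousAt

lemma primitive_nonpos (h0 : ∀ t ≤ 0, g t = 0) {x : ℝ} (hx : x ≤ 0) :
    ∫ t in (0:ℝ)..x, g t = 0 := by
  rw [intervalIntegral.integral_symm, intervalIntegral.integral_of_le hx,
    setIntegral_eq_zero_of_forall_eq_zero (fun t ht => h0 t ht.2), neg_zero]

lemma abs_le_of_bound (hlam : 0 < lam) (hC : 0 < C)
    (hg : ∀ x y, |g x - g y| ≤ C * (min |x - y| 1) ^ lam) (h0 : ∀ t ≤ 0, g t = 0) (x : ℝ) :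
    |g x| ≤ C := by
  have := hg x 0
  rw [h0 0 le_rfl, sub_zero] at this
  refine this.trans (mul_le_of_le_one_right hC.le ?_)
  exact Real.rpow_le_one (by positivity) (min_le_right _ _) hlam.le

/-- Since `g` vanishes on the negative axis, `∫_{y-s}^y g` only sees an interval of length
`min s y ≤ min s 1`. -/
lemma primitive_bound (hlam : 0 < lam) (hC : 0 < C)
    (hg : ∀ x y, |g x - g y| ≤ C * (min |x - y| 1) ^ lam) (h0 : ∀ t ≤ 0, g t = 0)
    {y s : ℝ} (hy : y ∈ Icc (0:ℝ) 1) (hs : 0 < s) :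
    |(∫ t in (0:ℝ)..y, g t) - ∫ t in (0:ℝ)..(y - s), g t| ≤ C * min s 1 := by
  have hc := cont_of_bound hlam hg
  have key : ∀ a, |∫ t in a..y, g t| ≤ C * |y - a| := fun a => by
    rw [← Real.norm_eq_abs]
    exact intervalIntegral.norm_integral_le_of_norm_le_const
      fun t _ => by rw [Real.norm_eq_abs]; exact abs_le_of_bound hlam hC hg h0 t
  rcases le_total s y with h | h
  · rw [intervalIntegral.integral_interval_sub_left (hc.intervalIntegrable _ _)
      (hc.intervalIntegrable _ _), min_eq_left (h.trans hy.2)]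
    simpa [abs_of_pos hs] using key (y - s)
  · rw [primitive_nonpos h0 (sub_nonpos.2 h), sub_zero]
    refine (key 0).trans (mul_le_mul_of_nonneg_left ?_ hC.le)
    rw [sub_zero, abs_of_nonneg hy.1]
    exact le_min h hy.2

lemma primitive_marchaud_integrable (hlam : 0 < lam) (hC : 0 < C)
    (hg : ∀ x y, |g x - g y| ≤ C * (min |x - y| 1) ^ lam) (h0 : ∀ t ≤ 0, g t = 0)
    {y : ℝ} (hα : 0 < α) (hα1 : α < 1) (hy : y ∈ Icc (0:ℝ) 1) :
    IntegrableOn (fun s : ℝ => ((∫ t in (0:ℝ)..y, g t) - ∫ t in (0:ℝ)..(y - s), g t)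
      * s ^ (-α - 1)) (Ioi 0) := by
  have hc := cont_of_bound hlam hg
  have hG : Continuous fun y => ∫ t in (0:ℝ)..y, g t :=
    continuous_iff_continuousAt.2 fun x => (primitive_hasDerivAt hc x).continuousAt
  refine Integrable.mono' ((kernel_integrable hα hα1 one_pos).1.const_mul C)
    ((cont_kernel (continuous_const.sub (hG.comp
      (continuous_const.sub continuous_id)))).aestronglyMeasurable measurableSet_Ioi) ?_
  filter_upwards [ae_restrict_mem measurableSet_Ioi] with s hs
  have hs : 0 < s := hs
  rw [norm_mul, Real.norm_eq_abs, Real.norm_of_nonneg (Real.rpow_nonneg hs.le _), ← mul_assoc,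
    Real.rpow_one]
  exact mul_le_mul_of_nonneg_right (primitive_bound hlam hC hg h0 hy hs)
    (Real.rpow_nonneg hs.le _)

/-- Differentiation under the integral sign: the `x`-derivative of the integrand is the Marchaud
integrand of `g`, dominated uniformly in `x`. -/
lemma hasDerivAt_marchaud_primitive (hα : 0 < α) (hl : α < lam) (hα1 : α < 1) (hC : 0 < C)
    (hg : ∀ x y, |g x - g y| ≤ C * (min |x - y| 1) ^ lam) (h0 : ∀ t ≤ 0, g t = 0)
    {y : ℝ} (hy : y ∈ Icc (0:ℝ) 1) :
    HasDerivAt (marchaud α fun x => ∫ t in (0:ℝ)..x, g t) (marchaud α g y) y := by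
  have hlam := hα.trans hl
  have hc := cont_of_bound hlam hg
  have hG : Continuous fun y => ∫ t in (0:ℝ)..y, g t :=
    continuous_iff_continuousAt.2 fun x => (primitive_hasDerivAt hc x).continuousAt
  refine HasDerivAt.const_mul α ?_
  refine (hasDerivAt_integral_of_dominated_loc_of_deriv_le
    (μ := volume.restrict (Ioi 0))
    (F := fun x s => ((∫ t in (0:ℝ)..x, g t) - ∫ t in (0:ℝ)..(x - s), g t) * s ^ (-α - 1))
    (F' := fun x s => (g x - g (x - s)) * s ^ (-α - 1))
    (bound := fun s => C * ((min s 1) ^ lam * s ^ (-α - 1)))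
    univ_mem ?_ (primitive_marchaud_integrable hlam hC hg h0 hα hα1 hy)
    (marchaud_integrable hα hl hg y).aestronglyMeasurable ?_
    ((kernel_integrable hα hl one_pos).1.const_mul C) ?_).2
  · exact Eventually.of_forall fun x => (cont_kernel (continuous_const.sub (hG.comp
      (continuous_const.sub continuous_id)))).aestronglyMeasurable measurableSet_Ioi
  · filter_upwards [ae_restrict_mem measurableSet_Ioi] with s hs x _
    exact marchaud_bound hg x s hs
  · refine Eventually.of_forall fun s x _ => ?_
    exact ((primitive_hasDerivAt hc x).sub
      ((primitive_hasDerivAt hc (x - s)).comp_sub_const x s)).mul_const _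

/-- Integration by parts. The boundary terms vanish since the increment of the primitive is
`O(s)` at `0` and bounded at infinity. -/
lemma marchaud_primitive_eq (hlam : 0 < lam) (hα : 0 < α) (hα1 : α < 1) (hC : 0 < C)
    (hg : ∀ x y, |g x - g y| ≤ C * (min |x - y| 1) ^ lam) (h0 : ∀ t ≤ 0, g t = 0)
    {y : ℝ} (hy : y ∈ Icc (0:ℝ) 1) :
    marchaud α (fun x => ∫ t in (0:ℝ)..x, g t) y =
      ∫ s in Ioi (0:ℝ), g (y - s) * s ^ (-α) := by
  have hc := cont_of_bound hlam hg
  set u : ℝ → ℝ := fun s => (∫ t in (0:ℝ)..y, g t) - ∫ t in (0:ℝ)..(y - s), g t with hu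
  have hub : ∀ s, 0 < s → |u s| ≤ C * min s 1 := fun s hs => primitive_bound hlam hC hg h0 hy hs
  have hd : ∀ s ∈ Ioi (0:ℝ), HasDerivAt u (g (y - s)) s := fun s _ => by
    simpa using ((primitive_hasDerivAt hc (y - s)).comp_const_sub y s).const_sub
      (∫ t in (0:ℝ)..y, g t)
  have hv : ∀ s ∈ Ioi (0:ℝ), HasDerivAt (fun s : ℝ => s ^ (-α)) (-α * s ^ (-α - 1)) s :=
    fun s hs => Real.hasDerivAt_rpow_const (Or.inl (ne_of_gt hs))
  have i1 : IntegrableOn (u * fun s : ℝ => -α * s ^ (-α - 1)) (Ioi 0) := by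
    refine ((primitive_marchaud_integrable hlam hC hg h0 hα hα1 hy).const_mul (-α)).congr ?_
    refine Eventually.of_forall fun s => ?_
    simp only [hu, Pi.mul_apply]; ring
  have i2 : IntegrableOn ((fun s => g (y - s)) * fun s : ℝ => s ^ (-α)) (Ioi 0) := by
    have hm : ContinuousOn (fun s : ℝ => g (y - s) * s ^ (-α)) (Ioi 0) :=
      cont_kernel (by fun_prop)
    have k : IntegrableOn (fun s : ℝ => g (y - s) * s ^ (-α)) (Ioc 0 1) := by
      have := (intervalIntegrable_iff_integrableOn_Ioc_of_le zero_le_one).1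
        (intervalIntegral.intervalIntegrable_rpow' (a := 0) (b := 1) (r := -α) (by linarith))
      refine Integrable.mono' (this.const_mul C)
        ((hm.mono Ioc_subset_Ioi_self).aestronglyMeasurable measurableSet_Ioc) ?_
      filter_upwards [ae_restrict_mem measurableSet_Ioc] with s hs
      rw [norm_mul, Real.norm_of_nonneg (Real.rpow_nonneg hs.1.le _)]
      exact mul_le_mul_of_nonneg_right (abs_le_of_bound hlam hC hg h0 _)
        (Real.rpow_nonneg hs.1.le _)
    refine k.of_forall_sdiff_eq_zero measurableSet_Ioi fun s hs => ?_
    have : 1 < s := not_le.1 fun h => hs.2 ⟨hs.1, h⟩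
    simp [h0 (y - s) (by linarith [hy.2])]
  have l0 : Tendsto (u * fun s : ℝ => s ^ (-α)) (nhdsWithin 0 (Ioi 0)) (nhds 0) := by
    have t : Tendsto (fun s : ℝ => C * s ^ (1 - α)) (nhdsWithin 0 (Ioi 0)) (nhds 0) := by
      have : ContinuousAt (fun s : ℝ => C * s ^ (1 - α)) 0 :=
        continuousAt_const.mul (Real.continuousAt_rpow_const _ _ (Or.inr (by linarith)))
      have h := this.tendsto.mono_left (nhdsWithin_le_nhds (s := Ioi 0))
      simpa [Real.zero_rpow (sub_pos.2 hα1).ne'] using h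
    refine squeeze_zero_norm' ?_ t
    filter_upwards [self_mem_nhdsWithin] with s hs
    have hs : 0 < s := hs
    rw [Pi.mul_apply, norm_mul, Real.norm_of_nonneg (Real.rpow_nonneg hs.le _), sub_eq_add_neg,
      Real.rpow_add hs, Real.rpow_one, ← mul_assoc]
    refine mul_le_mul_of_nonneg_right ?_ (Real.rpow_nonneg hs.le _)
    exact (hub s hs).trans (mul_le_mul_of_nonneg_left (min_le_left _ _) hC.le)
  have l1 : Tendsto (u * fun s : ℝ => s ^ (-α)) atTop (nhds 0) := by
    have t : Tendsto (fun s : ℝ => C * s ^ (-α)) atTop (nhds 0) := by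
      simpa using (tendsto_rpow_neg_atTop hα).const_mul C
    refine squeeze_zero_norm' ?_ t
    filter_upwards [eventually_gt_atTop 0] with s hs
    rw [Pi.mul_apply, norm_mul, Real.norm_of_nonneg (Real.rpow_nonneg hs.le _)]
    refine mul_le_mul_of_nonneg_right ?_ (Real.rpow_nonneg hs.le _)
    exact (hub s hs).trans (mul_le_of_le_one_right hC.le (min_le_right _ _))
  have := integral_Ioi_mul_deriv_eq_deriv_mul hd hv i1 i2 l0 l1
  have e : ∫ s in Ioi (0:ℝ), u s * (-α * s ^ (-α - 1)) =
      -(α * ∫ s in Ioi (0:ℝ), u s * s ^ (-α - 1)) := by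
    rw [← integral_const_mul, ← integral_neg]
    congr 1; ext s; ring
  rw [e] at this
  change α * ∫ s in Ioi (0:ℝ), u s * s ^ (-α - 1) = _
  linarith

end

/-- if `f ∈ H^lam([0,1])` with `f(0) = 0` and `0 < α < lam ≤ 1`, then `f`
admits a Riemann–Liouville fractional derivative of order `α` on `[0,1]` and
`D^α f ∈ H^{lam-α}([0,1])`. -/
theorem fracDeriv_of_holder (α lam : ℝ) (hα : 0 < α) (hαlam : α < lam) (hlam : lam ≤ 1)
    (f : ℝ → ℝ) (hf : HolderOn f lam (Set.Icc 0 1)) (hf0 : f 0 = 0) :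
    (∀ x ∈ Set.Icc (0:ℝ) 1, DifferentiableWithinAt ℝ (rlKer α f) (Set.Icc 0 1) x) ∧
    HolderOn (fracDeriv α f) (lam - α) (Set.Icc 0 1) := by
  obtain ⟨C, hC, hf⟩ := hf
  have hα1 : α < 1 := hαlam.trans_le hlam
  have hl0 : 0 < lam := hα.trans hαlam
  -- Extending `f` by `0` to the left and by `f 1` to the right keeps the Hölder bound.
  set g : ℝ → ℝ := fun t => f (max 0 (min 1 t)) with hgdef
  have hgI : ∀ t ∈ Icc (0:ℝ) 1, g t = f t := fun t ht => by
    simp [hgdef, ht.1, ht.2]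
  have h0 : ∀ t ≤ 0, g t = 0 := fun t ht => by
    simp [hgdef, min_eq_right (ht.trans zero_le_one), ht, hf0]
  have hg : ∀ x y, |g x - g y| ≤ C * (min |x - y| 1) ^ lam := fun x y => by
    have hp : ∀ t : ℝ, max 0 (min 1 t) ∈ Icc (0:ℝ) 1 := fun t =>
      ⟨le_max_left _ _, max_le zero_le_one (min_le_left _ _)⟩
    refine (hf _ (hp x) _ (hp y)).trans (mul_le_mul_of_nonneg_left ?_ hC.le)
    refine Real.rpow_le_rpow (abs_nonneg _) (le_min ?_ ?_) hl0.le
    · refine (abs_max_sub_max_le_max _ _ _ _).trans ?_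
      refine max_le (by simp) ((abs_min_sub_min_le_max _ _ _ _).trans (max_le (by simp) le_rfl))
    · rw [abs_le]
      constructor <;> linarith [(hp x).1, (hp x).2, (hp y).1, (hp y).2]
  have hK : ∀ y ∈ Icc (0:ℝ) 1, rlKer α f y = marchaud α (fun x => ∫ t in (0:ℝ)..x, g t) y := by
    intro y hy
    rw [marchaud_primitive_eq hl0 hα hα1 hC hg h0 hy]
    have e : ∫ s in Ioi (0:ℝ), g (y - s) * s ^ (-α) = ∫ s in Ioc (0:ℝ) y, g (y - s) * s ^ (-α) := by
      refine setIntegral_eq_of_subset_of_forall_sdiff_eq_zero measurableSet_Ioi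
        Ioc_subset_Ioi_self fun s hs => ?_
      have : y < s := not_le.1 fun h => hs.2 ⟨hs.1, h⟩
      simp [h0 (y - s) (by linarith)]
    have e2 := intervalIntegral.integral_comp_sub_left (a := 0) (b := y)
      (fun t => f t * (y - t) ^ (-α)) y
    simp only [sub_self, sub_zero, sub_sub_cancel] at e2
    rw [e, rlKer, ← e2, intervalIntegral.integral_of_le hy.1]
    refine setIntegral_congr_fun measurableSet_Ioc fun s hs => ?_
    rw [hgI (y - s) ⟨by linarith [hs.2], by linarith [hs.1, hy.2]⟩]
  have hD : ∀ y ∈ Icc (0:ℝ) 1, HasDerivWithinAt (rlKer α f) (marchaud α g y) (Icc 0 1) y :=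
    fun y hy => (hasDerivAt_marchaud_primitive hα hαlam hα1 hC hg h0 hy).hasDerivWithinAt.congr
      hK (hK y hy)
  refine ⟨fun x hx => (hD x hx).differentiableWithinAt, ?_⟩
  have hΓ : 0 < 1 / Real.Gamma (1 - α) := one_div_pos.2 (Real.Gamma_pos_of_pos (by linarith))
  have hlα : 0 < lam - α := sub_pos.2 hαlam
  refine ⟨1 / Real.Gamma (1 - α) * (α * (2 * C * (1 / (lam - α) + 1 / α))), by positivity,
    fun x hx y hy => ?_⟩
  have hu := uniqueDiffOn_Icc (zero_lt_one (α := ℝ))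
  rw [fracDeriv, fracDeriv, (hD x hx).derivWithin (hu x hx), (hD y hy).derivWithin (hu y hy),
    ← mul_sub, abs_mul, abs_of_pos hΓ, mul_assoc]
  exact mul_le_mul_of_nonneg_left (marchaud_holder hα hαlam hC hg x y) hΓ.le
end

section
/- Let α ∈ (0,1), K > 0 and let φ : [0,∞) → [0,∞) be measurable with ∫_0^∞ φ(s) ds = 1. Set F(x) = ∫_0^x φ(s) ds and suppose lim_{x→∞} α x^α (1 − F(x)) = K. Then as z → 0+, the Laplace transform of φ satisfies φ̂(z) = 1 − (K Γ(1−α)/α) z^α + o(z^α). -/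
/-!
Write `T x = 1 - F x` for the tail of `φ`. Since `1 - e^{-zs} = ∫_0^{zs} e^{-v} dv`, Fubini gives
`1 - φ̂(z) = ∫_0^∞ e^{-v} T(v/z) dv` (`one_sub_laplace_eq`). Dividing by `z^α`,
`(1 - φ̂(z)) / z^α = ∫_0^∞ e^{-v} v^{-α} ((v/z)^α T(v/z)) dv`,
where `x^α T x` is bounded on `(0,∞)` (`rpow_mul_tail_bounded`) and tends to `K/α` at infinity.
Dominated convergence with a multiple of the Gamma integrand as majorant yields the limit
`(K/α) Γ(1-α)`.
-/

open MeasureTheory Filter Set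

lemma tail_eq {φ : ℝ → ℝ} (hφ : IntegrableOn φ (Ioi 0)) (hnorm : (∫ s in Ioi (0:ℝ), φ s) = 1)
    {x : ℝ} (hx : 0 ≤ x) : (∫ s in Ioi x, φ s) = 1 - ∫ s in (0:ℝ)..x, φ s := by
  have h := intervalIntegral.integral_interval_add_Ioi hφ (hφ.mono_set (Ioi_subset_Ioi hx))
  linarith

/-- The Fubini step: the Laplace transform of `φ` in terms of its tail, already rescaled by
`v = z u`. -/
lemma one_sub_laplace_eq {φ : ℝ → ℝ} (hφ : IntegrableOn φ (Ioi 0))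
    (hnorm : (∫ s in Ioi (0:ℝ), φ s) = 1) {z : ℝ} (hz : 0 < z) :
    1 - laplace φ z = ∫ v in Ioi (0:ℝ), Real.exp (-v) * ∫ s in Ioi (v / z), φ s := by
  have hexp : IntegrableOn (fun v : ℝ => Real.exp (-v)) (Ioi 0) := integrableOn_exp_neg_Ioi 0
  have hmS : MeasurableSet {p : ℝ × ℝ | p.2 < z * p.1} :=
    measurableSet_lt measurable_snd (measurable_const.mul measurable_fst)
  have hint : Integrable
      (fun p : ℝ × ℝ => {p : ℝ × ℝ | p.2 < z * p.1}.indicator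
        (fun p => φ p.1 * Real.exp (-p.2)) p)
      ((volume.restrict (Ioi (0:ℝ))).prod (volume.restrict (Ioi (0:ℝ)))) :=
    (Integrable.mul_prod hφ hexp).indicator hmS
  have hswap := integral_integral_swap
    (f := fun s v => {p : ℝ × ℝ | p.2 < z * p.1}.indicator
        (fun p => φ p.1 * Real.exp (-p.2)) (s, v)) hint
  have hL : ∀ s ∈ Ioi (0:ℝ), (∫ v in Ioi (0:ℝ), {p : ℝ × ℝ | p.2 < z * p.1}.indicator
        (fun p => φ p.1 * Real.exp (-p.2)) (s, v)) = φ s - Real.exp (-z * s) * φ s := by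
    intro s hs
    have hzs : 0 ≤ z * s := (mul_pos hz hs).le
    have e1 : (fun v : ℝ => {p : ℝ × ℝ | p.2 < z * p.1}.indicator
        (fun p => φ p.1 * Real.exp (-p.2)) (s, v))
        = (Iio (z * s)).indicator (fun v => φ s * Real.exp (-v)) := by
      ext v; simp [indicator]
    rw [e1, setIntegral_indicator measurableSet_Iio, Ioi_inter_Iio, ← integral_Ioc_eq_integral_Ioo,
      ← intervalIntegral.integral_of_le hzs, intervalIntegral.integral_const_mul,
      intervalIntegral.integral_comp_neg (fun v => Real.exp v), integral_exp]
    simp only [neg_zero, Real.exp_zero, neg_mul]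
    ring
  have hR : ∀ v ∈ Ioi (0:ℝ), (∫ s in Ioi (0:ℝ), {p : ℝ × ℝ | p.2 < z * p.1}.indicator
        (fun p => φ p.1 * Real.exp (-p.2)) (s, v))
        = Real.exp (-v) * ∫ s in Ioi (v / z), φ s := by
    intro v hv
    have hvz : 0 < v / z := div_pos hv hz
    have e1 : (fun s : ℝ => {p : ℝ × ℝ | p.2 < z * p.1}.indicator
        (fun p => φ p.1 * Real.exp (-p.2)) (s, v))
        = (Ioi (v / z)).indicator (fun s => Real.exp (-v) * φ s) := by
      ext s; simp [indicator, div_lt_iff₀' hz, mul_comm]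
    rw [e1, setIntegral_indicator measurableSet_Ioi, Ioi_inter_Ioi, sup_of_le_right hvz.le,
      integral_const_mul]
  rw [setIntegral_congr_fun measurableSet_Ioi hL, setIntegral_congr_fun measurableSet_Ioi hR]
    at hswap
  have hint2 : IntegrableOn (fun s => Real.exp (-z * s) * φ s) (Ioi 0) := by
    refine Integrable.mono hφ
      ((by fun_prop : Continuous fun s : ℝ => Real.exp (-z * s)).aestronglyMeasurable.mul hφ.1) ?_
    filter_upwards [self_mem_ae_restrict measurableSet_Ioi] with s hs
    have : Real.exp (-z * s) ≤ 1 := Real.exp_le_one_iff.2 (by nlinarith [mul_pos hz hs])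
    rw [norm_mul, Real.norm_eq_abs, abs_of_pos (Real.exp_pos _)]
    exact mul_le_of_le_one_left (norm_nonneg _) this
  rw [← hswap, integral_sub hφ hint2, hnorm, laplace]

/-- A tail `T` with values in `[0,1]` for which `x^α T x` converges at infinity has `x^α T x`
bounded on all of `(0,∞)`. -/
lemma rpow_mul_tail_bounded {α L : ℝ} (hα : 0 < α) {T : ℝ → ℝ} (hT0 : ∀ x, 0 ≤ T x)
    (hT1 : ∀ x, T x ≤ 1) (h : Tendsto (fun x : ℝ => x ^ α * T x) atTop (nhds L)) :
    ∃ C, ∀ x, 0 < x → |x ^ α * T x| ≤ C := by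
  obtain ⟨X, hX⟩ := eventually_atTop.1 (h.eventually (eventually_le_nhds (lt_add_one L)))
  refine ⟨max (L + 1) (X ^ α), fun x hx => ?_⟩
  have hxa := Real.rpow_nonneg hx.le α
  rw [abs_of_nonneg (mul_nonneg hxa (hT0 x))]
  rcases le_total X x with h1 | h1
  · exact (hX x h1).trans (le_max_left _ _)
  · exact ((mul_le_of_le_one_right hxa (hT1 x)).trans
      (Real.rpow_le_rpow hx.le h1 hα.le)).trans (le_max_right _ _)

/-- Karamata-type expansion. If `φ ≥ 0` is a measurable density on
`[0,∞)` with `lim_{x→∞} α x^α (1 - F(x)) = K` where `F(x) = ∫_0^x φ`, then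
`φ̂(z) = 1 - (K Γ(1-α)/α) z^α + o(z^α)` as `z → 0+`. -/
theorem laplace_expansion_heavy_tail (α K : ℝ) (hα : α ∈ Set.Ioo (0:ℝ) 1) (hK : 0 < K)
    (φ : ℝ → ℝ) (hmeas : Measurable φ) (hpos : ∀ x, 0 ≤ φ x)
    (hnorm : (∫ s in Set.Ioi (0:ℝ), φ s) = 1)
    (htail : Filter.Tendsto (fun x : ℝ => α * x ^ α * (1 - ∫ s in (0:ℝ)..x, φ s))
      Filter.atTop (nhds K)) :
    Filter.Tendsto
      (fun z : ℝ => (laplace φ z - (1 - K * Real.Gamma (1 - α) / α * z ^ α)) / z ^ α)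
      (nhdsWithin 0 (Set.Ioi 0)) (nhds 0) := by
  obtain ⟨hα0, hα1⟩ := hα
  -- A non-integrable function would have junk integral `0 ≠ 1`.
  have hφ : IntegrableOn φ (Ioi 0) := by
    by_contra hcon
    rw [integral_undef hcon] at hnorm
    exact zero_ne_one hnorm
  -- Extending `φ` by zero makes the tail antitone, hence measurable, on the whole line.
  set ψ : ℝ → ℝ := (Ioi (0:ℝ)).indicator φ with hψdef
  have hψ : Integrable ψ := (integrable_indicator_iff measurableSet_Ioi).2 hφ
  have hψ0 : ∀ x, 0 ≤ ψ x := indicator_nonneg fun x _ => hpos x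
  set T : ℝ → ℝ := fun x => ∫ s in Ioi x, ψ s with hTdef
  have hTφ : ∀ x, 0 ≤ x → T x = ∫ s in Ioi x, φ s := fun x hx =>
    setIntegral_congr_fun measurableSet_Ioi fun s hs => indicator_of_mem (lt_of_le_of_lt hx hs) φ
  have hT0 : ∀ x, 0 ≤ T x := fun x => integral_nonneg hψ0
  have hT1 : ∀ x, T x ≤ 1 := fun x => by
    calc T x ≤ ∫ s, ψ s := setIntegral_le_integral hψ (ae_of_all _ hψ0)
      _ = 1 := by rw [hψdef, integral_indicator measurableSet_Ioi, hnorm]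
  have hTanti : Antitone T := fun x y hxy =>
    setIntegral_mono_set hψ.integrableOn (ae_of_all _ hψ0) (Ioi_subset_Ioi hxy).eventuallyLE
  have hTm : Measurable T := hTanti.measurable
  have hlim : Tendsto (fun x : ℝ => x ^ α * T x) atTop (nhds (K / α)) := by
    refine (htail.div_const α).congr' ?_
    filter_upwards [eventually_ge_atTop 0] with x hx
    rw [hTφ x hx, tail_eq hφ hnorm hx]
    field_simp
  obtain ⟨C, hC⟩ := rpow_mul_tail_bounded hα0 hT0 hT1 hlim
  have hGamma : (∫ v in Ioi (0:ℝ), Real.exp (-v) * v ^ (-α)) = Real.Gamma (1 - α) := by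
    rw [Real.Gamma_eq_integral (by linarith)]
    simp
  have hGint : IntegrableOn (fun v : ℝ => Real.exp (-v) * v ^ (-α)) (Ioi 0) := by
    have := Real.GammaIntegral_convergent (s := 1 - α) (by linarith)
    simpa using this
  have hDCT : Tendsto (fun z : ℝ => ∫ v in Ioi (0:ℝ),
      Real.exp (-v) * v ^ (-α) * ((v / z) ^ α * T (v / z))) (nhdsWithin 0 (Ioi 0))
      (nhds (∫ v in Ioi (0:ℝ), Real.exp (-v) * v ^ (-α) * (K / α))) := by
    refine tendsto_integral_filter_of_dominated_convergence
      (fun v => Real.exp (-v) * v ^ (-α) * C) ?_ ?_ (hGint.mul_const C) ?_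
    · refine Eventually.of_forall fun z => Measurable.aestronglyMeasurable ?_
      fun_prop
    · filter_upwards [self_mem_nhdsWithin] with z hz
      filter_upwards [self_mem_ae_restrict measurableSet_Ioi] with v hv
      have h0 : 0 ≤ Real.exp (-v) * v ^ (-α) :=
        mul_nonneg (Real.exp_pos _).le (Real.rpow_nonneg (le_of_lt hv) _)
      rw [norm_mul, Real.norm_of_nonneg h0]
      exact mul_le_mul_of_nonneg_left (hC _ (div_pos hv hz)) h0
    · filter_upwards [self_mem_ae_restrict measurableSet_Ioi] with v hv
      refine Tendsto.const_mul _ (hlim.comp ?_)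
      exact (tendsto_inv_nhdsGT_zero.const_mul_atTop hv).congr fun z => (div_eq_mul_inv v z).symm
  rw [integral_mul_const, hGamma] at hDCT
  have hfin := (tendsto_const_nhds (x := Real.Gamma (1 - α) * (K / α))).sub hDCT
  rw [sub_self] at hfin
  refine hfin.congr' ?_
  filter_upwards [self_mem_nhdsWithin] with z hz
  have hz : 0 < z := hz
  have hza : 0 < z ^ α := Real.rpow_pos_of_pos hz α
  have hkey : (∫ v in Ioi (0:ℝ), Real.exp (-v) * v ^ (-α) * ((v / z) ^ α * T (v / z)))
      = (1 - laplace φ z) / z ^ α := by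
    rw [one_sub_laplace_eq hφ hnorm hz, ← integral_div]
    refine setIntegral_congr_fun measurableSet_Ioi fun v hv => ?_
    have hv : 0 < v := hv
    have hva : 0 < v ^ α := Real.rpow_pos_of_pos hv α
    simp only [← hTφ (v / z) (div_pos hv hz).le, Real.rpow_neg hv.le, Real.div_rpow hv.le hz.le]
    field_simp
  rw [hkey]
  field_simp
  ring
end
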